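/- arXiv:2011.03653 — 10 statements merged into one kernel-verified Lean document; each statement's English description precedes it below -/
import Mathlib

section
/- For each fixed reference price r ∈ P = [p̲, p̄], the set of best-response profiles B(r) = {(p_1, p_2) ∈ P² : for i = 1,2, p_i maximizes p ↦ π_i(p, p_{−i}, r) over P} is nonempty; moreover, whenever B(r) is not a singleton it is totally ordered under the componentwise order, i.e., for any (p_1, p_2), (q_1, q_2) ∈ B(r), either (p_1 ≤ q_1 and p_2 ≤ q_2) or (q_1 ≤ p_1 and q_2 ≤ p_2). -/
/-!
For a fixed rival price, a firm's revenue is a concave parabola `p * (A - β * p)` with vertex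
`A / (2 * β)`, so the projection of the vertex onto `[pl, pu]` maximizes it there (`clamp_max`).
This best response depends continuously on the rival price, so the composition of the two best
responses is a continuous self-map of `[pl, pu]`; a fixed point of it, given by the intermediate
value theorem, is an equilibrium. The order claim is strategic complementarity: adding the two
optimality inequalities of firm 1 in two equilibria `p`, `q` gives
`0 ≤ δ₁ * (q.1 - p.1) * (q.2 - p.2)`, so the two coordinates cannot move in opposite directions.
-/

theorem clamp_mem {pl pu : ℝ} (h : pl < pu) (a : ℝ) : max pl (min pu a) ∈ Set.Icc pl pu :=
  ⟨le_max_left _ _, max_le h.le (min_le_left _ _)⟩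

/-- The projection of the vertex onto the interval maximizes the parabola there, since
`p * (A - β * p) = β * ((A / (2 * β)) ^ 2 - (p - A / (2 * β)) ^ 2)`. -/
theorem clamp_max {pl pu A β : ℝ} (h : pl < pu) (hβ : 0 < β) {p : ℝ} (hp : p ∈ Set.Icc pl pu) :
    p * (A - β * p) ≤
      max pl (min pu (A / (2 * β))) * (A - β * max pl (min pu (A / (2 * β)))) := by
  obtain ⟨a, ha⟩ : ∃ a, a = A / (2 * β) := ⟨_, rfl⟩
  have hA : A = 2 * β * a := by rw [ha]; field_simp
  rw [← ha, hA]
  obtain ⟨h1, h2⟩ := hp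
  obtain ⟨c, hc⟩ : ∃ c, c = max pl (min pu a) := ⟨_, rfl⟩
  rw [← hc]
  have key : 0 ≤ (c - p) * (2 * a - c - p) := by
    rcases le_total pu a with h3 | h3
    · rw [min_eq_left h3, max_eq_right h.le] at hc
      apply mul_nonneg <;> linarith
    · rw [min_eq_right h3] at hc
      rcases le_total pl a with h4 | h4
      · rw [max_eq_right h4] at hc
        rw [hc]
        nlinarith [sq_nonneg (a - p)]
      · rw [max_eq_left h4] at hc
        apply mul_nonneg_of_nonpos_of_nonpos <;> linarith
  nlinarith [mul_nonneg hβ.le key]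

theorem exists_fixed {pl pu : ℝ} (h : pl < pu) {f : ℝ → ℝ} (hf : Continuous f)
    (hm : ∀ x, f x ∈ Set.Icc pl pu) : ∃ x ∈ Set.Icc pl pu, f x = x := by
  have h0 : (0 : ℝ) ∈ Set.Icc (pl - f pl) (pu - f pu) :=
    ⟨by linarith [(hm pl).1], by linarith [(hm pu).2]⟩
  obtain ⟨x, hx, hx0⟩ :=
    intermediate_value_Icc h.le (f := fun x => x - f x) (by fun_prop) h0
  exact ⟨x, hx, by linarith [show x - f x = 0 from hx0]⟩

/-- For each fixed reference price `r ∈ P = [pl, pu]`, the set of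
best-response profiles `B(r)` is nonempty, and it is totally ordered under the
componentwise order. -/
theorem stmt_0
    (pl pu : ℝ) (hpl : 0 < pl) (hlu : pl < pu)
    (α₁ α₂ β₁ β₂ δ₁ δ₂ γ₁ γ₂ m : ℝ)
    (hα₁ : 0 < α₁) (hα₂ : 0 < α₂) (hδ₁ : 0 < δ₁) (hδ₂ : 0 < δ₂)
    (hγ₁ : 0 < γ₁) (hγ₂ : 0 < γ₂) (hm : 2 ≤ m)
    (hβ₁ : m * (δ₁ + γ₁) ≤ β₁) (hβ₂ : m * (δ₂ + γ₂) ≤ β₂)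
    (π₁ π₂ : ℝ → ℝ → ℝ → ℝ)
    (hπ₁ : ∀ p q ρ, π₁ p q ρ = p * (α₁ - β₁ * p + δ₁ * q + γ₁ * ρ))
    (hπ₂ : ∀ p q ρ, π₂ p q ρ = q * (α₂ - β₂ * q + δ₂ * p + γ₂ * ρ))
    (r : ℝ) (hr : r ∈ Set.Icc pl pu)
    (B : Set (ℝ × ℝ))
    (hB : B = {p : ℝ × ℝ | p.1 ∈ Set.Icc pl pu ∧ p.2 ∈ Set.Icc pl pu ∧
      (∀ q ∈ Set.Icc pl pu, π₁ q p.2 r ≤ π₁ p.1 p.2 r) ∧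
      (∀ q ∈ Set.Icc pl pu, π₂ p.1 q r ≤ π₂ p.1 p.2 r)}) :
    B.Nonempty ∧
      ∀ p ∈ B, ∀ q ∈ B,
        (p.1 ≤ q.1 ∧ p.2 ≤ q.2) ∨ (q.1 ≤ p.1 ∧ q.2 ≤ p.2) := by
  have hb₁ : 0 < β₁ := by nlinarith
  have hb₂ : 0 < β₂ := by nlinarith
  subst hB
  constructor
  · let R₁ : ℝ → ℝ := fun q => max pl (min pu ((α₁ + δ₁ * q + γ₁ * r) / (2 * β₁)))
    let R₂ : ℝ → ℝ := fun p => max pl (min pu ((α₂ + δ₂ * p + γ₂ * r) / (2 * β₂)))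
    have hR₁ : Continuous R₁ := by
      change Continuous fun q => max pl (min pu ((α₁ + δ₁ * q + γ₁ * r) / (2 * β₁)))
      fun_prop
    have hR₂ : Continuous R₂ := by
      change Continuous fun p => max pl (min pu ((α₂ + δ₂ * p + γ₂ * r) / (2 * β₂)))
      fun_prop
    obtain ⟨x, hx, hfix⟩ := exists_fixed hlu (hR₁.comp hR₂) (fun x => clamp_mem hlu _)
    have hfix' : R₁ (R₂ x) = x := hfix
    refine ⟨(x, R₂ x), hx, clamp_mem hlu _, fun q hq => ?_, fun q hq => ?_⟩
    · have := clamp_max (A := α₁ + δ₁ * R₂ x + γ₁ * r) hlu hb₁ hq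
      change _ ≤ R₁ (R₂ x) * (_ - β₁ * R₁ (R₂ x)) at this
      rw [hfix'] at this
      simp only [hπ₁]
      linarith
    · have := clamp_max (A := α₂ + δ₂ * x + γ₂ * r) hlu hb₂ hq
      change _ ≤ R₂ x * (_ - β₂ * R₂ x) at this
      simp only [hπ₂]
      linarith
  · rintro ⟨p₁, p₂⟩ ⟨hp₁, -, hp, -⟩ ⟨q₁, q₂⟩ ⟨hq₁, -, hq, -⟩
    have h1 := hp q₁ hq₁
    have h2 := hq p₁ hp₁
    simp only [hπ₁] at h1 h2
    have h3 : 0 ≤ δ₁ * ((q₁ - p₁) * (q₂ - p₂)) := by linarith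
    have h4 : 0 ≤ (q₁ - p₁) * (q₂ - p₂) := nonneg_of_mul_nonneg_right h3 hδ₁
    rcases mul_nonneg_iff.mp h4 with ⟨h5, h6⟩ | ⟨h5, h6⟩
    · exact Or.inl ⟨by simpa using h5, by simpa using h6⟩
    · exact Or.inr ⟨by simpa using h5, by simpa using h6⟩
end

section
/- Any Stable Nash Equilibrium (p_1*, p_2*, r*) lying in the open cube (p̲, p̄)³ is given by the closed form p_i* = (2α_i β_{−i} − α_i θ_{−i} γ_{−i} + α_{−i}(δ_i + θ_{−i} γ_i)) / D for i = 1,2, and r* = (θ_1(2α_1β_2 + α_2δ_1) + θ_2(2α_2β_1 + α_1δ_2)) / D, where D = (2β_1 − θ_1γ_1)(2β_2 − θ_2γ_2) − (θ_2γ_1 + δ_1)(θ_1γ_2 + δ_2). In particular, there is at most one SNE in (p̲, p̄)³. -/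
/-!
At an interior best response the derivative of a firm's concave quadratic revenue vanishes
(`foc`), so `2 βᵢ pᵢ = αᵢ + δᵢ p₋ᵢ + γᵢ r`. Substituting `r = θ₁ p₁ + θ₂ p₂` leaves the
`2 × 2` linear system
`(2 βᵢ - θᵢ γᵢ) pᵢ - (δᵢ + θ₋ᵢ γᵢ) p₋ᵢ = αᵢ`, whose determinant is `D`. The margin `m ≥ 2` makes
the system strictly diagonally dominant, so `D > 0` (`det_pos`) and Cramer's rule
(`cramer`) gives the closed form; uniqueness is the fact that the closed form depends only on
the parameters.
-/

/-- First-order condition at an interior maximizer of the revenue `p * (c - b * p)`. -/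
lemma foc {l u b c x : ℝ} (hx : x ∈ Set.Ioo l u)
    (hmax : ∀ p ∈ Set.Icc l u, p * (c - b * p) ≤ x * (c - b * x)) :
    2 * b * x = c := by
  have hloc : IsLocalMax (fun p : ℝ => p * (c - b * p)) x := by
    filter_upwards [Icc_mem_nhds hx.1 hx.2] with p hp using hmax p hp
  have hder : HasDerivAt (fun p : ℝ => p * (c - b * p))
      (1 * (c - b * x) + x * (-(b * 1))) x :=
    (hasDerivAt_id x).mul (((hasDerivAt_id x).const_mul b).const_sub c)
  linarith [hloc.hasDerivAt_eq_zero hder]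

/-- Strict diagonal dominance of a single row. -/
lemma row_dom {b d g m t s : ℝ} (hd : 0 < d) (hg : 0 < g) (hm : 2 ≤ m)
    (hb : m * (d + g) ≤ b) (hts : t + s = 1) : s * g + d < 2 * b - t * g := by
  have h : 2 * (d + g) ≤ m * (d + g) := by gcongr
  have h' : t * g + s * g = g := by rw [← add_mul, hts, one_mul]
  linarith

lemma det_pos {a₁ a₂ e₁ e₂ : ℝ} (h₁ : e₁ < a₁) (h₂ : e₂ < a₂) (he₁ : 0 < e₁) (he₂ : 0 < e₂) :
    0 < a₁ * a₂ - e₁ * e₂ :=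
  sub_pos.2 (mul_lt_mul'' h₁ h₂ he₁.le he₂.le)

/-- The first-order conditions together with `r = t₁ p + t₂ q` determine `(p, q, r)`
by Cramer's rule. -/
lemma cramer {a₁ a₂ b₁ b₂ d₁ d₂ g₁ g₂ t₁ t₂ p q r D : ℝ} (hD0 : D ≠ 0)
    (hD : D = (2 * b₁ - t₁ * g₁) * (2 * b₂ - t₂ * g₂) - (t₂ * g₁ + d₁) * (t₁ * g₂ + d₂))
    (h₁ : 2 * b₁ * p = a₁ + d₁ * q + g₁ * r) (h₂ : 2 * b₂ * q = a₂ + d₂ * p + g₂ * r)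
    (hr : r = t₁ * p + t₂ * q) :
    p = (2 * a₁ * b₂ - a₁ * t₂ * g₂ + a₂ * (d₁ + t₂ * g₁)) / D ∧
    q = (2 * a₂ * b₁ - a₂ * t₁ * g₁ + a₁ * (d₂ + t₁ * g₂)) / D ∧
    r = (t₁ * (2 * a₁ * b₂ + a₂ * d₁) + t₂ * (2 * a₂ * b₁ + a₁ * d₂)) / D := by
  subst hr
  have hp : p * D = 2 * a₁ * b₂ - a₁ * t₂ * g₂ + a₂ * (d₁ + t₂ * g₁) := by
    rw [hD]
    linear_combination (2 * b₂ - t₂ * g₂) * h₁ + (d₁ + t₂ * g₁) * h₂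
  have hq : q * D = 2 * a₂ * b₁ - a₂ * t₁ * g₁ + a₁ * (d₂ + t₁ * g₂) := by
    rw [hD]
    linear_combination (2 * b₁ - t₁ * g₁) * h₂ + (d₂ + t₁ * g₂) * h₁
  refine ⟨(eq_div_iff hD0).2 hp, (eq_div_iff hD0).2 hq, (eq_div_iff hD0).2 ?_⟩
  linear_combination t₁ * hp + t₂ * hq

/-- Any Stable Nash Equilibrium lying in the open cube
`(pl, pu)³` is given by the explicit closed form; in particular, there is at
most one SNE in the open cube. -/
theorem stmt_3
    (pl pu : ℝ) (hpl : 0 < pl) (hlu : pl < pu)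
    (α₁ α₂ β₁ β₂ δ₁ δ₂ γ₁ γ₂ m θ₁ θ₂ : ℝ)
    (hα₁ : 0 < α₁) (hα₂ : 0 < α₂) (hδ₁ : 0 < δ₁) (hδ₂ : 0 < δ₂)
    (hγ₁ : 0 < γ₁) (hγ₂ : 0 < γ₂) (hm : 2 ≤ m)
    (hβ₁ : m * (δ₁ + γ₁) ≤ β₁) (hβ₂ : m * (δ₂ + γ₂) ≤ β₂)
    (hθ₁ : θ₁ ∈ Set.Ioo (0 : ℝ) 1) (hθ₂ : θ₂ ∈ Set.Ioo (0 : ℝ) 1) (hθ : θ₁ + θ₂ = 1)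
    (π₁ π₂ : ℝ → ℝ → ℝ → ℝ)
    (hπ₁ : ∀ p q ρ, π₁ p q ρ = p * (α₁ - β₁ * p + δ₁ * q + γ₁ * ρ))
    (hπ₂ : ∀ p q ρ, π₂ p q ρ = q * (α₂ - β₂ * q + δ₂ * p + γ₂ * ρ))
    (p₁s p₂s rs : ℝ)
    (hp₁s : p₁s ∈ Set.Ioo pl pu) (hp₂s : p₂s ∈ Set.Ioo pl pu) (hrs : rs ∈ Set.Ioo pl pu)
    (hBR₁ : ∀ p ∈ Set.Icc pl pu, π₁ p p₂s rs ≤ π₁ p₁s p₂s rs)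
    (hBR₂ : ∀ p ∈ Set.Icc pl pu, π₂ p₁s p rs ≤ π₂ p₁s p₂s rs)
    (hstab : rs = θ₁ * p₁s + θ₂ * p₂s)
    (D : ℝ)
    (hD : D = (2 * β₁ - θ₁ * γ₁) * (2 * β₂ - θ₂ * γ₂) -
      (θ₂ * γ₁ + δ₁) * (θ₁ * γ₂ + δ₂)) :
    p₁s = (2 * α₁ * β₂ - α₁ * θ₂ * γ₂ + α₂ * (δ₁ + θ₂ * γ₁)) / D ∧
    p₂s = (2 * α₂ * β₁ - α₂ * θ₁ * γ₁ + α₁ * (δ₂ + θ₁ * γ₂)) / D ∧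
    rs = (θ₁ * (2 * α₁ * β₂ + α₂ * δ₁) + θ₂ * (2 * α₂ * β₁ + α₁ * δ₂)) / D ∧
    -- at most one SNE in the open cube
    (∀ q₁ q₂ qr : ℝ, q₁ ∈ Set.Ioo pl pu → q₂ ∈ Set.Ioo pl pu → qr ∈ Set.Ioo pl pu →
      (∀ p ∈ Set.Icc pl pu, π₁ p q₂ qr ≤ π₁ q₁ q₂ qr) →
      (∀ p ∈ Set.Icc pl pu, π₂ q₁ p qr ≤ π₂ q₁ q₂ qr) →
      qr = θ₁ * q₁ + θ₂ * q₂ →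
      q₁ = p₁s ∧ q₂ = p₂s ∧ qr = rs) := by
  have hD0 : D ≠ 0 := by
    have hpos : ∀ {t g d : ℝ}, 0 < t → 0 < g → 0 < d → 0 < t * g + d := by
      intro t g d _ _ _
      positivity
    rw [hD]
    exact (det_pos (row_dom hδ₁ hγ₁ hm hβ₁ hθ)
      (row_dom hδ₂ hγ₂ hm hβ₂ (by linarith : θ₂ + θ₁ = 1))
      (hpos hθ₂.1 hγ₁ hδ₁) (hpos hθ₁.1 hγ₂ hδ₂)).ne'
  have key : ∀ q₁ q₂ qr : ℝ, q₁ ∈ Set.Ioo pl pu → q₂ ∈ Set.Ioo pl pu →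
      (∀ p ∈ Set.Icc pl pu, π₁ p q₂ qr ≤ π₁ q₁ q₂ qr) →
      (∀ p ∈ Set.Icc pl pu, π₂ q₁ p qr ≤ π₂ q₁ q₂ qr) →
      qr = θ₁ * q₁ + θ₂ * q₂ →
      q₁ = (2 * α₁ * β₂ - α₁ * θ₂ * γ₂ + α₂ * (δ₁ + θ₂ * γ₁)) / D ∧
      q₂ = (2 * α₂ * β₁ - α₂ * θ₁ * γ₁ + α₁ * (δ₂ + θ₁ * γ₂)) / D ∧
      qr = (θ₁ * (2 * α₁ * β₂ + α₂ * δ₁) + θ₂ * (2 * α₂ * β₁ + α₁ * δ₂)) / D := by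
    intro q₁ q₂ qr h₁ h₂ hB₁ hB₂ hr
    refine cramer hD0 hD (foc h₁ fun p hp => ?_) (foc h₂ fun p hp => ?_) hr
    · have h := hB₁ p hp
      rw [hπ₁, hπ₁] at h
      linarith
    · have h := hB₂ p hp
      rw [hπ₂, hπ₂] at h
      linarith
  obtain ⟨e₁, e₂, e₃⟩ := key p₁s p₂s rs hp₁s hp₂s hBR₁ hBR₂ hstab
  refine ⟨e₁, e₂, e₃, fun q₁ q₂ qr h₁ h₂ _ hB₁ hB₂ hr => ?_⟩
  obtain ⟨f₁, f₂, f₃⟩ := key q₁ q₂ qr h₁ h₂ hB₁ hB₂ hr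
  exact ⟨f₁.trans e₁.symm, f₂.trans e₂.symm, f₃.trans e₃.symm⟩
end

section
/- Let (p_{1,t})_{t≥1} and (p_{2,t})_{t≥1} be arbitrary sequences in P = [p̲, p̄], let r_1 ∈ P, and define r_{t+1} = a r_t + (1−a)(θ_1 p_{1,t} + θ_2 p_{2,t}). Define nature's sequence by p_{n,1} = r_1 and, for t ≥ 1, y_{n,t+1} = p_{n,t} − (1−a)(p_{n,t} − θ_1 p_{1,t} − θ_2 p_{2,t}) with p_{n,t+1} = Π_P(y_{n,t+1}), where Π_P(z) = min(max(z, p̲), p̄); this is the online-mirror-descent update for the cost π̃_n(p_1, p_2, p_n) = p_n²/2 − (θ_1 p_1 + θ_2 p_2) p_n with regularizer R_n(z) = z²/2 and constant step size 1−a. Then p_{n,t} = r_t for all t ≥ 1 (in particular y_{n,t+1} ∈ P for all t, so the projection is never active). -/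
/-!
The unprojected update simplifies to `a * pn t + (1 - a) * (θ₁ * p₁ t + θ₂ * p₂ t)`, which is exactly
the recursion for `r`. By convexity of `[pl, pu]` the sequence `r` stays in `[pl, pu]`, so as long as
`pn t = r t` the unprojected point `y (t + 1) = r (t + 1)` is feasible and the projection fixes it.
-/

/-- Nature's OMD update with cost `π̃ₙ`, quadratic regularizer and
constant step size `1 − a` recovers the reference-price trajectory:
`p_{n,t} = r_t` for all `t`, and the projection is never active. -/
theorem stmt_5
    (pl pu a θ₁ θ₂ : ℝ) (hpl : 0 < pl) (hlu : pl < pu)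
    (ha : a ∈ Set.Ioo (0 : ℝ) 1) (hθ₁ : θ₁ ∈ Set.Ioo (0 : ℝ) 1)
    (hθ₂ : θ₂ ∈ Set.Ioo (0 : ℝ) 1) (hθ : θ₁ + θ₂ = 1)
    (p₁ p₂ : ℕ → ℝ)
    (hp₁ : ∀ t, p₁ t ∈ Set.Icc pl pu) (hp₂ : ∀ t, p₂ t ∈ Set.Icc pl pu)
    (r : ℕ → ℝ) (hr0 : r 0 ∈ Set.Icc pl pu)
    (hrupd : ∀ t, r (t + 1) = a * r t + (1 - a) * (θ₁ * p₁ t + θ₂ * p₂ t))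
    (pn y : ℕ → ℝ)
    (hpn0 : pn 0 = r 0)
    (hy : ∀ t, y (t + 1) = pn t - (1 - a) * (pn t - θ₁ * p₁ t - θ₂ * p₂ t))
    (hproj : ∀ t, pn (t + 1) = min (max (y (t + 1)) pl) pu) :
    (∀ t, pn t = r t) ∧ (∀ t, y (t + 1) ∈ Set.Icc pl pu) := by
  have hr : ∀ t, r t ∈ Set.Icc pl pu := by
    intro t
    induction t with
    | zero => exact hr0
    | succ t ih =>
      have hq : θ₁ * p₁ t + θ₂ * p₂ t ∈ Set.Icc pl pu :=
        convex_Icc pl pu (hp₁ t) (hp₂ t) hθ₁.1.le hθ₂.1.le hθ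
      rw [hrupd]
      exact convex_Icc pl pu ih hq ha.1.le (sub_nonneg.2 ha.2.le) (add_sub_cancel a 1)
  have hstep : ∀ t, pn t = r t → y (t + 1) = r (t + 1) := by
    intro t h
    rw [hy, hrupd, h]
    ring
  have hpn : ∀ t, pn t = r t := by
    intro t
    induction t with
    | zero => exact hpn0
    | succ t ih =>
      rw [hproj, hstep t ih, max_eq_left (hr (t + 1)).1, min_eq_left (hr (t + 1)).2]
  exact ⟨hpn, fun t => hstep t (hpn t) ▸ hr (t + 1)⟩
end

section
/- Assume there exists a Stable Nash Equilibrium (p_1*, p_2*, r*) in the open cube (p̲, p̄)³. Consider the static 3-player game in which players 1 and 2 choose actions in P = [p̲, p̄] to minimize the costs π̃_i(p_1, p_2, p_n) = −p_i(α_i − β_i p_i + δ_i p_{−i} + γ_i p_n) for i = 1,2, and player n chooses an action in P to minimize π̃_n(p_1, p_2, p_n) = p_n²/2 − (θ_1 p_1 + θ_2 p_2) p_n. Then this game admits a unique pure-strategy Nash equilibrium, i.e., a unique (q_1, q_2, q_n) ∈ P³ such that each player's cost is minimized over P given the other two coordinates, and this equilibrium equals (p_1*, p_2*, r*). -/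
/-!
Each of the three players maximizes a concave quadratic `p * (A - b * p)` over `[pl, pu]`, where
the intercept `A` is an affine function of the other players' actions (for nature, `b = 1/2` and
`A = θ₁ p₁ + θ₂ p₂`). The maximizer of such a quadratic depends on the intercept in a
`1 / (2b)`-Lipschitz way (`two_mul_abs_sub_le_of_isMax`), by adding the first-order variational
inequalities (`foc_of_isMax`) at two maximizers.

Let `a`, `b`, `c` be the distances between the actions of firm 1, firm 2 and nature in two
equilibria. Then `c ≤ θ₁ a + θ₂ b ≤ max a b`, while `2 β₁ a ≤ δ₁ b + γ₁ c` and
`2 β₂ b ≤ δ₂ a + γ₂ c`. Since `δᵢ + γᵢ ≤ βᵢ`, the best-response map contracts the larger of `a`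
and `b`, so both vanish, and with them `c`. The existence half is immediate: nature's cost
differs from `(pn - rs)² / 2` by a constant, and the firms' conditions are those of the SNE.
-/

/-- First-order variational inequality at a maximizer of `p * (A - b * p)` over an interval. -/
lemma foc_of_isMax {pl pu A b x y : ℝ} (hb : 0 < b)
    (hx : x ∈ Set.Icc pl pu) (hy : y ∈ Set.Icc pl pu)
    (hmax : ∀ p ∈ Set.Icc pl pu, p * (A - b * p) ≤ x * (A - b * x)) :
    (A - 2 * b * x) * (y - x) ≤ 0 := by
  by_contra! hD
  set D := (A - 2 * b * x) * (y - x) with hDdef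
  set E := b * (y - x) ^ 2 with hEdef
  have hE : 0 ≤ E := by positivity
  -- moving from `x` to `x + t (y - x)` gains `t * D - t ^ 2 * E`, positive for this `t`
  obtain ⟨t, ht⟩ : ∃ t, t = D / (D + E) := ⟨_, rfl⟩
  have ht0 : 0 < t := by rw [ht]; positivity
  have ht1 : t ≤ 1 := by rw [ht, div_le_one (by positivity)]; linarith
  have htD : t * (D + E) = D := by rw [ht]; field_simp
  have hz : x + t * (y - x) ∈ Set.Icc pl pu := by
    obtain ⟨h1, h2⟩ := hx
    obtain ⟨h3, h4⟩ := hy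
    constructor <;> nlinarith
  have hgain : t * (D - t * E) ≤ 0 := by
    have := hmax _ hz
    rw [hDdef, hEdef]
    linarith
  have : D - t * E = t * D := by linarith
  rw [this] at hgain
  have : 0 < t * (t * D) := by positivity
  linarith

/-- The maximizer of `p * (A - b * p)` over an interval is `1 / (2b)`-Lipschitz in `A`. -/
lemma two_mul_abs_sub_le_of_isMax {pl pu A B b x y : ℝ} (hb : 0 < b)
    (hx : x ∈ Set.Icc pl pu) (hy : y ∈ Set.Icc pl pu)
    (hxmax : ∀ p ∈ Set.Icc pl pu, p * (A - b * p) ≤ x * (A - b * x))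
    (hymax : ∀ p ∈ Set.Icc pl pu, p * (B - b * p) ≤ y * (B - b * y)) :
    2 * b * |x - y| ≤ |A - B| := by
  have h1 := foc_of_isMax hb hx hy hxmax
  have h2 := foc_of_isMax hb hy hx hymax
  have h3 : 2 * b * (x - y) ^ 2 ≤ (A - B) * (x - y) := by linarith
  have h4 : (A - B) * (x - y) ≤ |A - B| * |x - y| := by
    rw [← abs_mul]; exact le_abs_self _
  rcases (abs_nonneg (x - y)).eq_or_lt with h0 | h0
  · rw [← h0]; simp
  · refine le_of_mul_le_mul_right ?_ h0
    calc 2 * b * |x - y| * |x - y| = 2 * b * (x - y) ^ 2 := by rw [← sq_abs (x - y)]; ring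
      _ ≤ _ := h3.trans h4

lemma abs_comb_le {s t u v : ℝ} (hs : 0 ≤ s) (ht : 0 ≤ t) :
    |s * u + t * v| ≤ s * |u| + t * |v| := by
  simpa [abs_mul, abs_of_nonneg hs, abs_of_nonneg ht] using abs_add_le (s * u) (t * v)

/-- One step of the contraction: the larger of the two firms' deviations, here `b`, vanishes. -/
lemma larger_deviation_nonpos {a b c β δ γ : ℝ} (hδ : 0 < δ) (hγ : 0 < γ) (hβ : δ + γ ≤ β)
    (hab : a ≤ b) (hcb : c ≤ b) (h : 2 * β * b ≤ δ * a + γ * c) : b ≤ 0 := by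
  by_contra! hb
  nlinarith [mul_le_mul_of_nonneg_left hab hδ.le, mul_le_mul_of_nonneg_left hcb hγ.le,
    mul_le_mul_of_nonneg_right hβ hb.le, mul_pos hδ hb, mul_pos hγ hb]

/-- Given an interior Stable Nash Equilibrium, the induced static
3-player game (firms 1, 2 and nature n, all minimizing their costs over `P`)
admits a unique pure-strategy Nash equilibrium, which equals the SNE. -/
theorem stmt_6
    (pl pu : ℝ) (hpl : 0 < pl) (hlu : pl < pu)
    (α₁ α₂ β₁ β₂ δ₁ δ₂ γ₁ γ₂ m θ₁ θ₂ : ℝ)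
    (hα₁ : 0 < α₁) (hα₂ : 0 < α₂) (hδ₁ : 0 < δ₁) (hδ₂ : 0 < δ₂)
    (hγ₁ : 0 < γ₁) (hγ₂ : 0 < γ₂) (hm : 2 ≤ m)
    (hβ₁ : m * (δ₁ + γ₁) ≤ β₁) (hβ₂ : m * (δ₂ + γ₂) ≤ β₂)
    (hθ₁ : θ₁ ∈ Set.Ioo (0 : ℝ) 1) (hθ₂ : θ₂ ∈ Set.Ioo (0 : ℝ) 1) (hθ : θ₁ + θ₂ = 1)
    -- the cost functions of the 3-player game
    (c₁ c₂ cn : ℝ → ℝ → ℝ → ℝ)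
    (hc₁ : ∀ p₁ p₂ pn, c₁ p₁ p₂ pn = -(p₁ * (α₁ - β₁ * p₁ + δ₁ * p₂ + γ₁ * pn)))
    (hc₂ : ∀ p₁ p₂ pn, c₂ p₁ p₂ pn = -(p₂ * (α₂ - β₂ * p₂ + δ₂ * p₁ + γ₂ * pn)))
    (hcn : ∀ p₁ p₂ pn, cn p₁ p₂ pn = pn ^ 2 / 2 - (θ₁ * p₁ + θ₂ * p₂) * pn)
    -- an interior Stable Nash Equilibrium
    (p₁s p₂s rs : ℝ)
    (hp₁s : p₁s ∈ Set.Ioo pl pu) (hp₂s : p₂s ∈ Set.Ioo pl pu) (hrs : rs ∈ Set.Ioo pl pu)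
    (hBR₁ : ∀ p ∈ Set.Icc pl pu,
      p * (α₁ - β₁ * p + δ₁ * p₂s + γ₁ * rs) ≤ p₁s * (α₁ - β₁ * p₁s + δ₁ * p₂s + γ₁ * rs))
    (hBR₂ : ∀ p ∈ Set.Icc pl pu,
      p * (α₂ - β₂ * p + δ₂ * p₁s + γ₂ * rs) ≤ p₂s * (α₂ - β₂ * p₂s + δ₂ * p₁s + γ₂ * rs))
    (hstab : rs = θ₁ * p₁s + θ₂ * p₂s) :
    -- (p₁s, p₂s, rs) is a pure-strategy Nash equilibrium of the 3-player game
    ((∀ p ∈ Set.Icc pl pu, c₁ p₁s p₂s rs ≤ c₁ p p₂s rs) ∧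
     (∀ p ∈ Set.Icc pl pu, c₂ p₁s p₂s rs ≤ c₂ p₁s p rs) ∧
     (∀ p ∈ Set.Icc pl pu, cn p₁s p₂s rs ≤ cn p₁s p₂s p)) ∧
    -- and it is the unique one
    (∀ q₁ q₂ qn : ℝ, q₁ ∈ Set.Icc pl pu → q₂ ∈ Set.Icc pl pu → qn ∈ Set.Icc pl pu →
      (∀ p ∈ Set.Icc pl pu, c₁ q₁ q₂ qn ≤ c₁ p q₂ qn) →
      (∀ p ∈ Set.Icc pl pu, c₂ q₁ q₂ qn ≤ c₂ q₁ p qn) →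
      (∀ p ∈ Set.Icc pl pu, cn q₁ q₂ qn ≤ cn q₁ q₂ p) →
      q₁ = p₁s ∧ q₂ = p₂s ∧ qn = rs) := by
  obtain ⟨hθ₁0, -⟩ := hθ₁
  obtain ⟨hθ₂0, -⟩ := hθ₂
  have hb₁ : δ₁ + γ₁ ≤ β₁ := by nlinarith
  have hb₂ : δ₂ + γ₂ ≤ β₂ := by nlinarith
  have hn : ∀ p, cn p₁s p₂s rs ≤ cn p₁s p₂s p := by
    intro p
    rw [hcn, hcn, ← hstab]
    nlinarith [sq_nonneg (p - rs)]
  refine ⟨⟨fun p hp => ?_, fun p hp => ?_, fun p _ => hn p⟩, ?_⟩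
  · rw [hc₁, hc₁]; exact neg_le_neg (hBR₁ p hp)
  · rw [hc₂, hc₂]; exact neg_le_neg (hBR₂ p hp)
  intro q₁ q₂ qn hq₁ hq₂ hqn h₁ h₂ h₃
  have k₁ : 2 * β₁ * |q₁ - p₁s| ≤ δ₁ * |q₂ - p₂s| + γ₁ * |qn - rs| := by
    refine le_trans (two_mul_abs_sub_le_of_isMax (A := α₁ + δ₁ * q₂ + γ₁ * qn)
      (B := α₁ + δ₁ * p₂s + γ₁ * rs) (by linarith) hq₁ (Set.Ioo_subset_Icc_self hp₁s)
      (fun p hp => ?_) (fun p hp => ?_)) (le_trans (le_of_eq ?_) (abs_comb_le hδ₁.le hγ₁.le))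
    · have := h₁ p hp; rw [hc₁, hc₁] at this; linarith
    · have := hBR₁ p hp; linarith
    · congr 1; ring
  have k₂ : 2 * β₂ * |q₂ - p₂s| ≤ δ₂ * |q₁ - p₁s| + γ₂ * |qn - rs| := by
    refine le_trans (two_mul_abs_sub_le_of_isMax (A := α₂ + δ₂ * q₁ + γ₂ * qn)
      (B := α₂ + δ₂ * p₁s + γ₂ * rs) (by linarith) hq₂ (Set.Ioo_subset_Icc_self hp₂s)
      (fun p hp => ?_) (fun p hp => ?_)) (le_trans (le_of_eq ?_) (abs_comb_le hδ₂.le hγ₂.le))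
    · have := h₂ p hp; rw [hc₂, hc₂] at this; linarith
    · have := hBR₂ p hp; linarith
    · congr 1; ring
  have k₃ : |qn - rs| ≤ θ₁ * |q₁ - p₁s| + θ₂ * |q₂ - p₂s| := by
    have := two_mul_abs_sub_le_of_isMax (b := 1 / 2) (A := θ₁ * q₁ + θ₂ * q₂)
      (B := θ₁ * p₁s + θ₂ * p₂s) (by norm_num) hqn (Set.Ioo_subset_Icc_self hrs)
      (fun p hp => by have := h₃ p hp; rw [hcn, hcn] at this; linarith)
      (fun p _ => by have := hn p; rw [hcn, hcn] at this; linarith)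
    have e : θ₁ * q₁ + θ₂ * q₂ - (θ₁ * p₁s + θ₂ * p₂s)
        = θ₁ * (q₁ - p₁s) + θ₂ * (q₂ - p₂s) := by ring
    rw [e] at this
    linarith [abs_comb_le (u := q₁ - p₁s) (v := q₂ - p₂s) hθ₁0.le hθ₂0.le]
  have key : |q₁ - p₁s| ≤ 0 ∧ |q₂ - p₂s| ≤ 0 := by
    rcases le_total |q₁ - p₁s| |q₂ - p₂s| with h | h
    · have hc : |qn - rs| ≤ |q₂ - p₂s| := by
        have e : θ₂ = 1 - θ₁ := by linarith
        rw [e] at k₃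
        linarith [mul_le_mul_of_nonneg_left h hθ₁0.le]
      have h0 := larger_deviation_nonpos hδ₂ hγ₂ hb₂ h hc k₂
      exact ⟨h.trans h0, h0⟩
    · have hc : |qn - rs| ≤ |q₁ - p₁s| := by
        have e : θ₁ = 1 - θ₂ := by linarith
        rw [e] at k₃
        linarith [mul_le_mul_of_nonneg_left h hθ₂0.le]
      have h0 := larger_deviation_nonpos hδ₁ hγ₁ hb₁ h hc k₁
      exact ⟨h0, h.trans h0⟩
  have e₁ := abs_nonpos_iff.mp key.1
  have e₂ := abs_nonpos_iff.mp key.2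
  rw [e₁, e₂, abs_zero, mul_zero, mul_zero, add_zero] at k₃
  exact ⟨sub_eq_zero.mp e₁, sub_eq_zero.mp e₂, sub_eq_zero.mp (abs_nonpos_iff.mp k₃)⟩
end

section
/- Assume there exists a Stable Nash Equilibrium in the open cube (p̲, p̄)³. If for i = 1,2 firm i runs the OMD dynamics with a σ_i-strongly convex, continuously differentiable regularizer R_i and a nonincreasing step-size sequence (ε_{i,t})_t with lim_{t→∞} ε_{i,t} = 0, then the sequence (p_{1,t}, p_{2,t}, r_t) converges as t → ∞. -/
/-!
Convergence comes from a contraction of asymptotic oscillations.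

Say that a real sequence has oscillation at most `D` if it eventually stays in some fixed interval
of length `D`. With `b = (α + δ p₋ᵢ + γ r) / (2β)` the (unconstrained) best response, the gradient
is `2β (p - b)`. If the steps are not summable, the mirror step drifts towards `b` and vanishes in
size, so `p` eventually obeys any upper bound `c ≥ pl` lying strictly above an eventual bound of
`b` (`track_upper`), and symmetrically from below (`track_lower`). Hence the oscillation of `p` is
at most any number exceeding that of `b`. If the steps are summable, `p` is Cauchy and has
arbitrarily small oscillation. Both cases are covered by `EvOsc.track`.

The reference price averages the posted prices, so its oscillation is not larger than theirs, up to
an arbitrarily small amount (`EvOsc.average`). Since `δ + γ ≤ β / 2`, the map to best responses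
shrinks oscillations by the factor `1/4`. Thus, if all three sequences have oscillation at most `D`,
then, leaving slack for the two arbitrarily small losses, the prices have oscillation at most `D/2`
(`firm_contract`) and the reference price at most `3/4 D`. Iterating, the oscillations are arbitrarily small, the three
sequences are Cauchy, and they converge.
-/

open Filter Topology


/-- The sequence `f` eventually stays in some interval of length `D`. -/
def EvOsc (f : ℕ → ℝ) (D : ℝ) : Prop :=
  ∃ l, ∀ᶠ t in atTop, l ≤ f t ∧ f t ≤ l + D

lemma EvOsc.linear {f g h : ℕ → ℝ} {D E c x y : ℝ} (hf : EvOsc f D) (hg : EvOsc g E)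
    (hx : 0 ≤ x) (hy : 0 ≤ y) (hh : ∀ t, h t = c + x * f t + y * g t) :
    EvOsc h (x * D + y * E) := by
  obtain ⟨l, hl⟩ := hf
  obtain ⟨k, hk⟩ := hg
  refine ⟨c + x * l + y * k, ?_⟩
  filter_upwards [hl, hk] with t h1 h2
  have e1 := mul_le_mul_of_nonneg_left h1.1 hx
  have e2 := mul_le_mul_of_nonneg_left h1.2 hx
  have e3 := mul_le_mul_of_nonneg_left h2.1 hy
  have e4 := mul_le_mul_of_nonneg_left h2.2 hy
  rw [hh]
  constructor <;> linarith

lemma EvOsc.mono {f : ℕ → ℝ} {D E : ℝ} (hf : EvOsc f D) (h : D ≤ E) : EvOsc f E := by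
  obtain ⟨l, hl⟩ := hf
  refine ⟨l, ?_⟩
  filter_upwards [hl] with t ht
  exact ⟨ht.1, by linarith⟩

lemma tendsto_of_evOsc {f : ℕ → ℝ} (h : ∀ D, 0 < D → EvOsc f D) :
    ∃ L, Tendsto f atTop (𝓝 L) := by
  apply cauchySeq_tendsto_of_complete
  rw [Metric.cauchySeq_iff]
  intro e he
  obtain ⟨l, hl⟩ := h (e / 2) (by linarith)
  obtain ⟨N, hN⟩ := eventually_atTop.1 hl
  refine ⟨N, fun m hm n hn => ?_⟩
  have h1 := hN m hm
  have h2 := hN n hn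
  rw [Real.dist_eq, abs_lt]
  constructor <;> linarith

lemma evOsc_of_tendsto {f : ℕ → ℝ} {L D : ℝ} (h : Tendsto f atTop (𝓝 L)) (hD : 0 < D) :
    EvOsc f D := by
  refine ⟨L - D / 2, ?_⟩
  filter_upwards [h.eventually (Icc_mem_nhds (show L - D / 2 < L by linarith)
    (show L < L + D / 2 by linarith))] with t ht
  exact ⟨ht.1, by linarith [ht.2]⟩

lemma average_upper {r s : ℕ → ℝ} {a u c : ℝ} (ha0 : 0 < a) (ha1 : a < 1)
    (hr : ∀ t, r (t + 1) = a * r t + (1 - a) * s t) (hs : ∀ᶠ t in atTop, s t ≤ u)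
    (huc : u < c) : ∀ᶠ t in atTop, r t ≤ c := by
  obtain ⟨T, hT⟩ := eventually_atTop.1 hs
  have key : ∀ n, r (n + T) ≤ u + a ^ n * (r T - u) := by
    intro n
    induction n with
    | zero => simp
    | succ n ih =>
      have h1 := mul_le_mul_of_nonneg_left ih ha0.le
      have h2 := mul_le_mul_of_nonneg_left (hT (n + T) (by omega)) (sub_pos.2 ha1).le
      have h3 := hr (n + T)
      rw [show n + 1 + T = n + T + 1 by omega, h3, pow_succ]
      linarith
  have hlim : Tendsto (fun n : ℕ => u + a ^ n * (r T - u)) atTop (𝓝 u) := by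
    simpa using ((tendsto_pow_atTop_nhds_zero_of_lt_one ha0.le ha1).mul_const (r T - u)).const_add u
  have h := hlim.eventually (gt_mem_nhds huc)
  rw [← map_add_atTop_eq_nat T, eventually_map]
  filter_upwards [h] with n hn
  exact (key n).trans hn.le

/-- Exponential smoothing does not increase the oscillation, up to an arbitrarily small amount. -/
lemma EvOsc.average {r s : ℕ → ℝ} {a D D' : ℝ} (hs : EvOsc s D) (ha0 : 0 < a) (ha1 : a < 1)
    (hr : ∀ t, r (t + 1) = a * r t + (1 - a) * s t) (hD : D < D') : EvOsc r D' := by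
  obtain ⟨l, hl⟩ := hs
  have h1 := average_upper (c := l + D + (D' - D) / 2) ha0 ha1 hr
    (hl.mono fun t ht => ht.2) (by linarith)
  have h2 := average_upper (r := fun t => - r t) (s := fun t => - s t) (u := -l)
    (c := -l + (D' - D) / 2) ha0 ha1 (fun t => by rw [hr]; ring)
    (hl.mono fun t ht => neg_le_neg ht.1) (by linarith)
  refine ⟨l - (D' - D) / 2, ?_⟩
  filter_upwards [h1, h2] with t h1 h2
  constructor <;> linarith

/-- Projected mirror steps towards targets `b`, with non-summable vanishing step sizes, eventually
obey every admissible upper bound strictly above the targets. Here `F` stands for the derivative of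
the regularizer. Only the lower end `pl` of the price range matters. -/
lemma track_upper {F : ℝ → ℝ} {σ k pl c c' : ℝ} {ε y p b : ℕ → ℝ}
    (hF : ∀ x y, x ≤ y → σ * (y - x) ≤ F y - F x) (hσ : 0 < σ) (hk : 0 < k)
    (hε0 : ∀ t, 0 ≤ ε t) (hεs : ¬ Summable ε) (hεl : Tendsto ε atTop (𝓝 0))
    (hp : ∀ t, pl ≤ p t) (hpy : ∀ t, p t ≤ max (y t) pl)
    (hy : ∀ t, F (y (t + 1)) = F (p t) - ε t * (k * (p t - b t)))
    (hc : pl ≤ c) (hcc : c' < c) (hb : ∀ᶠ t in atTop, b t ≤ c') :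
    ∀ᶠ t in atTop, p t ≤ c := by
  have hFm : ∀ x y, x ≤ y → F x ≤ F y := fun x y h => by
    have := hF x y h
    have := mul_nonneg hσ.le (sub_nonneg.2 h)
    linarith
  have hsmall : ∀ᶠ t in atTop, ε t * (k * (c' - pl)) ≤ σ * (c - c') := by
    have h : Tendsto (fun t => ε t * (k * (c' - pl))) atTop (𝓝 0) := by
      simpa using hεl.mul_const (k * (c' - pl))
    exact (h.eventually (gt_mem_nhds (mul_pos hσ (sub_pos.2 hcc)))).mono fun t ht => ht.le
  obtain ⟨T, hT⟩ := eventually_atTop.1 (hb.and hsmall)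
  have inv : ∀ t, T ≤ t → p t ≤ c → p (t + 1) ≤ c := by
    intro t ht hpc
    obtain ⟨hbt, hst⟩ := hT t ht
    refine (hpy (t + 1)).trans (max_le ?_ hc)
    rcases le_or_gt (y (t + 1)) (p t) with h | h
    · exact h.trans hpc
    · -- An upward move forces `p t` to lie below its target, hence below `c'`.
      have h1 := hF _ _ h.le
      rw [hy t] at h1
      have h2 := mul_pos hσ (sub_pos.2 h)
      have hpb : p t ≤ b t := by
        by_contra hlt
        have := mul_nonneg (hε0 t) (mul_nonneg hk.le (sub_nonneg.2 (not_le.1 hlt).le))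
        linarith
      have h3 : ε t * (k * (b t - p t)) ≤ ε t * (k * (c' - pl)) :=
        mul_le_mul_of_nonneg_left
          (mul_le_mul_of_nonneg_left (by linarith [hp t]) hk.le) (hε0 t)
      have h4 : σ * (y (t + 1) - p t) ≤ σ * (c - c') := by linarith
      have := le_of_mul_le_mul_left h4 hσ
      linarith
  have entry : ∃ t, T ≤ t ∧ p t ≤ c := by
    by_contra! hcon
    -- Above `c` each step lowers `F (p t)` by at least `ε t * k * (c - c')`, while `F ∘ p` is
    -- bounded below; so the partial sums of `ε` would be bounded.
    have key : ∀ n, (∑ i ∈ Finset.range n, ε (i + T)) * (k * (c - c')) ≤ F (p T) - F (p (n + T)) := by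
      intro n
      induction n with
      | zero => simp
      | succ n ih =>
        have hn := hcon (n + T) (by omega)
        have hn1 := hcon (n + T + 1) (by omega)
        obtain ⟨hbt, -⟩ := hT (n + T) (by omega)
        have hle : p (n + T + 1) ≤ y (n + T + 1) := by
          rcases le_max_iff.1 (hpy (n + T + 1)) with h | h
          · exact h
          · linarith
        have h1 := hFm _ _ hle
        rw [hy] at h1
        have h2 : ε (n + T) * (k * (c - c')) ≤ ε (n + T) * (k * (p (n + T) - b (n + T))) :=
          mul_le_mul_of_nonneg_left
            (mul_le_mul_of_nonneg_left (by linarith) hk.le) (hε0 _)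
        rw [Finset.sum_range_succ, add_mul, show n + 1 + T = n + T + 1 by omega]
        linarith
    apply hεs
    rw [← summable_nat_add_iff T]
    refine summable_of_sum_range_le (c := (F (p T) - F pl) / (k * (c - c')))
      (fun n => hε0 _) fun n => ?_
    rw [le_div_iff₀ (mul_pos hk (sub_pos.2 hcc))]
    linarith [key n, hFm _ _ (hp (n + T))]
  obtain ⟨t₀, ht₀, hpt₀⟩ := entry
  refine eventually_atTop.2 ⟨t₀, fun t ht => ?_⟩
  induction t, ht using Nat.le_induction with
  | base => exact hpt₀
  | succ t ht ih => exact inv t (ht₀.trans ht) ih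

/-- Mirror image of `track_upper`, obtained by negating all prices and conjugating `F`. -/
lemma track_lower {F : ℝ → ℝ} {σ k pu c c' : ℝ} {ε y p b : ℕ → ℝ}
    (hF : ∀ x y, x ≤ y → σ * (y - x) ≤ F y - F x) (hσ : 0 < σ) (hk : 0 < k)
    (hε0 : ∀ t, 0 ≤ ε t) (hεs : ¬ Summable ε) (hεl : Tendsto ε atTop (𝓝 0))
    (hp : ∀ t, p t ≤ pu) (hpy : ∀ t, min (y t) pu ≤ p t)
    (hy : ∀ t, F (y (t + 1)) = F (p t) - ε t * (k * (p t - b t)))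
    (hc : c ≤ pu) (hcc : c < c') (hb : ∀ᶠ t in atTop, c' ≤ b t) :
    ∀ᶠ t in atTop, c ≤ p t := by
  have h := track_upper (F := fun x => - F (-x)) (σ := σ) (k := k) (pl := -pu) (c := -c) (c' := -c')
    (ε := ε) (y := fun t => - y t) (p := fun t => - p t) (b := fun t => - b t)
    (fun x y hxy => by linarith [hF (-y) (-x) (by linarith)]) hσ hk hε0 hεs hεl
    (fun t => neg_le_neg (hp t)) (fun t => by rw [max_neg_neg]; exact neg_le_neg (hpy t))
    (fun t => by simp only [neg_neg]; rw [hy]; ring) (neg_le_neg hc) (neg_lt_neg hcc)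
    (hb.mono fun t ht => neg_le_neg ht)
  exact h.mono fun t ht => neg_le_neg_iff.1 ht

/-- With summable steps and bounded targets the mirror iterates have finite length. -/
lemma summable_case {F : ℝ → ℝ} {σ k pl pu B : ℝ} {ε y p b : ℕ → ℝ}
    (hF : ∀ x y, x ≤ y → σ * (y - x) ≤ F y - F x) (hσ : 0 < σ) (hk : 0 < k)
    (hε0 : ∀ t, 0 ≤ ε t) (hεs : Summable ε)
    (hp : ∀ t, pl ≤ p t ∧ p t ≤ pu)
    (hpy : ∀ t, p t = min (max (y t) pl) pu)
    (hy : ∀ t, F (y (t + 1)) = F (p t) - ε t * (k * (p t - b t)))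
    (hB : ∀ t, |p t - b t| ≤ B) :
    ∃ L, Tendsto p atTop (𝓝 L) := by
  apply cauchySeq_tendsto_of_complete
  refine cauchySeq_of_summable_dist (Summable.of_nonneg_of_le (fun _ => dist_nonneg) (fun t => ?_)
    (hεs.mul_right (k * B / σ)))
  have h1 : |p t - p (t + 1)| ≤ |p t - y (t + 1)| := by
    have e : p t = min (max (p t) pl) pu := by
      rw [max_eq_left (hp t).1, min_eq_left (hp t).2]
    have e1 := abs_min_sub_min_le_max (max (p t) pl) pu (max (y (t + 1)) pl) pu
    have e2 := abs_max_sub_max_le_max (p t) pl (y (t + 1)) pl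
    rw [← e, ← hpy] at e1
    simp only [sub_self, abs_zero] at e1 e2
    rw [max_eq_left (abs_nonneg (_ : ℝ))] at e1 e2
    exact e1.trans e2
  have h2 : σ * |p t - y (t + 1)| ≤ |F (p t) - F (y (t + 1))| := by
    rcases le_total (p t) (y (t + 1)) with h | h
    · rw [abs_sub_comm, abs_of_nonneg (sub_nonneg.2 h), abs_sub_comm]
      exact (hF _ _ h).trans (le_abs_self _)
    · rw [abs_of_nonneg (sub_nonneg.2 h)]
      exact (hF _ _ h).trans (le_abs_self _)
  have h3 : |F (p t) - F (y (t + 1))| ≤ ε t * (k * B) := by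
    rw [hy, sub_sub_cancel, abs_mul, abs_mul, abs_of_nonneg (hε0 t), abs_of_pos hk]
    exact mul_le_mul_of_nonneg_left (mul_le_mul_of_nonneg_left (hB t) hk.le) (hε0 t)
  rw [Real.dist_eq, ← mul_div_assoc, le_div_iff₀ hσ]
  have := mul_le_mul_of_nonneg_left h1 hσ.le
  linarith

/-- The posted prices oscillate at most as much as their targets, up to an arbitrarily small
amount. -/
lemma EvOsc.track {F : ℝ → ℝ} {σ k pl pu B D D' : ℝ} {ε y p b : ℕ → ℝ} (hosc : EvOsc b D)
    (hlu : pl < pu)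
    (hF : ∀ x y, x ≤ y → σ * (y - x) ≤ F y - F x) (hσ : 0 < σ) (hk : 0 < k)
    (hε0 : ∀ t, 0 ≤ ε t) (hεl : Tendsto ε atTop (𝓝 0))
    (hpy : ∀ t, p t = min (max (y t) pl) pu)
    (hy : ∀ t, F (y (t + 1)) = F (p t) - ε t * (k * (p t - b t)))
    (hB : ∀ t, |p t - b t| ≤ B) (hD0 : 0 ≤ D) (hD : D < D') : EvOsc p D' := by
  have hp : ∀ t, pl ≤ p t ∧ p t ≤ pu := fun t => by
    rw [hpy]; exact ⟨le_min (le_max_right _ _) hlu.le, min_le_right _ _⟩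
  by_cases hs : Summable ε
  · obtain ⟨L, hL⟩ := summable_case hF hσ hk hε0 hs hp hpy hy hB
    exact evOsc_of_tendsto hL (hD0.trans_lt hD)
  · obtain ⟨l, hl⟩ := hosc
    have hu := track_upper (pl := pl) (c := max pl (l + D + (D' - D) / 2)) hF hσ hk hε0 hs hεl
      (fun t => (hp t).1) (fun t => by rw [hpy]; exact min_le_left _ _) hy (le_max_left _ _)
      (lt_max_of_lt_right (by linarith)) (hl.mono fun t ht => ht.2)
    have hd := track_lower (pu := pu) (c := min pu (l - (D' - D) / 2)) hF hσ hk hε0 hs hεl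
      (fun t => (hp t).2)
      (fun t => by rw [hpy]; exact min_le_min_right _ (le_max_left _ _)) hy (min_le_left _ _)
      (min_lt_of_right_lt (by linarith)) (hl.mono fun t ht => ht.1)
    -- The two bounds are intersected with `[pl, pu]`; clipping does not lengthen the interval.
    refine ⟨max pl (min pu (l - (D' - D) / 2)), ?_⟩
    filter_upwards [hu, hd] with t h1 h2
    refine ⟨max_le (hp t).1 h2, ?_⟩
    have h3 := (hp t).2
    have h4 := le_max_left pl (min pu (l - (D' - D) / 2))
    have h5 := le_max_right pl (min pu (l - (D' - D) / 2))
    rcases le_max_iff.1 h1 with h | h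
    · linarith
    · rcases min_choice pu (l - (D' - D) / 2) with e | e <;> rw [e] at h5 h4 ⊢ <;> linarith

lemma strong_mono {R R' : ℝ → ℝ} {σ : ℝ}
    (h : ∀ x y : ℝ, R y + R' y * (x - y) + σ / 2 * (x - y) ^ 2 ≤ R x) :
    ∀ x y, x ≤ y → σ * (y - x) ≤ R' y - R' x := by
  intro x y hxy
  rcases hxy.eq_or_lt with rfl | hlt
  · simp
  · have h1 : (y - x) * (σ * (y - x)) ≤ (y - x) * (R' y - R' x) := by
      linarith [h x y, h y x]
    exact le_of_mul_le_mul_left h1 (sub_pos.2 hlt)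

/-- One firm's share of the contraction: if the rival price and the reference price have
oscillation at most `D`, then the firm's own price has oscillation at most `D / 2`. -/
lemma firm_contract {R R' : ℝ → ℝ} {σ α β δ γ m pl pu D : ℝ} {ε y p q r : ℕ → ℝ}
    (hlu : pl < pu) (hδ : 0 < δ) (hγ : 0 < γ) (hm : 2 ≤ m)
    (hβ : m * (δ + γ) ≤ β) (hσ : 0 < σ)
    (hR : ∀ x y : ℝ, R y + R' y * (x - y) + σ / 2 * (x - y) ^ 2 ≤ R x)
    (hε0 : ∀ t, 0 ≤ ε t) (hεl : Tendsto ε atTop (𝓝 0))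
    (hpy : ∀ t, p t = min (max (y t) pl) pu)
    (hy : ∀ t, R' (y (t + 1)) = R' (p t) - ε t * (2 * β * p t - (α + δ * q t + γ * r t)))
    (hqb : ∀ t, pl ≤ q t ∧ q t ≤ pu) (hrb : ∀ t, pl ≤ r t ∧ r t ≤ pu)
    (hq : EvOsc q D) (hr : EvOsc r D) (hD : 0 < D) : EvOsc p (D / 2) := by
  have hβ2 : 2 * (δ + γ) ≤ β := (mul_le_mul_of_nonneg_right hm (by positivity)).trans hβ
  have hk : 0 < 2 * β := by linarith
  have hp : ∀ t, pl ≤ p t ∧ p t ≤ pu := fun t => by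
    rw [hpy]; exact ⟨le_min (le_max_right _ _) hlu.le, min_le_right _ _⟩
  have hb := hq.linear (h := fun t => (α + δ * q t + γ * r t) / (2 * β)) (c := α / (2 * β)) hr
    (div_pos hδ hk).le (div_pos hγ hk).le (fun t => by ring)
  have hsum : δ / (2 * β) * D + γ / (2 * β) * D ≤ D / 4 := by
    rw [← add_mul, ← add_div]
    have : (δ + γ) / (2 * β) ≤ 1 / 4 := by
      rw [div_le_iff₀ hk]; linarith
    nlinarith
  have hM : ∀ x, pl ≤ x ∧ x ≤ pu → |x| ≤ max |pl| |pu| := fun x hx => abs_le_max_abs_abs hx.1 hx.2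
  refine (hb.mono hsum).track (k := 2 * β)
    (B := max |pl| |pu| + (|α| + δ * max |pl| |pu| + γ * max |pl| |pu|) / (2 * β))
    hlu (strong_mono hR) hσ hk hε0 hεl hpy (fun t => ?_) (fun t => ?_) (by linarith) (by linarith)
  · rw [hy, mul_sub (2 * β), mul_div_cancel₀ _ hk.ne']
  · refine (abs_sub _ _).trans (add_le_add (hM _ (hp t)) ?_)
    rw [abs_div, abs_of_pos hk]
    gcongr
    refine (abs_add_three _ _ _).trans ?_
    rw [abs_mul, abs_mul, abs_of_pos hδ, abs_of_pos hγ]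
    have := hM _ (hqb t)
    have := hM _ (hrb t)
    gcongr


/-- Under an interior SNE assumption, if both firms run OMD with
strongly convex, continuously differentiable regularizers and nonincreasing step
sizes tending to zero, then `(p₁ₜ, p₂ₜ, rₜ)` converges. -/
theorem stmt_7
    (pl pu : ℝ) (hpl : 0 < pl) (hlu : pl < pu)
    (α₁ α₂ β₁ β₂ δ₁ δ₂ γ₁ γ₂ m a θ₁ θ₂ σ₁ σ₂ : ℝ)
    (hα₁ : 0 < α₁) (hα₂ : 0 < α₂) (hδ₁ : 0 < δ₁) (hδ₂ : 0 < δ₂)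
    (hγ₁ : 0 < γ₁) (hγ₂ : 0 < γ₂) (hm : 2 ≤ m)
    (hβ₁ : m * (δ₁ + γ₁) ≤ β₁) (hβ₂ : m * (δ₂ + γ₂) ≤ β₂)
    (ha : a ∈ Set.Ioo (0 : ℝ) 1) (hθ₁ : θ₁ ∈ Set.Ioo (0 : ℝ) 1)
    (hθ₂ : θ₂ ∈ Set.Ioo (0 : ℝ) 1) (hθ : θ₁ + θ₂ = 1)
    -- existence of an interior Stable Nash Equilibrium
    (p₁s p₂s rs : ℝ)
    (hp₁s : p₁s ∈ Set.Ioo pl pu) (hp₂s : p₂s ∈ Set.Ioo pl pu) (hrs : rs ∈ Set.Ioo pl pu)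
    (hBR₁ : ∀ p ∈ Set.Icc pl pu,
      p * (α₁ - β₁ * p + δ₁ * p₂s + γ₁ * rs) ≤ p₁s * (α₁ - β₁ * p₁s + δ₁ * p₂s + γ₁ * rs))
    (hBR₂ : ∀ p ∈ Set.Icc pl pu,
      p * (α₂ - β₂ * p + δ₂ * p₁s + γ₂ * rs) ≤ p₂s * (α₂ - β₂ * p₂s + δ₂ * p₁s + γ₂ * rs))
    (hstab : rs = θ₁ * p₁s + θ₂ * p₂s)
    -- regularizers: continuously differentiable and strongly convex
    (R₁ R₂ R₁' R₂' : ℝ → ℝ)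
    (hR₁d : ∀ x, HasDerivAt R₁ (R₁' x) x) (hR₁c : Continuous R₁')
    (hR₂d : ∀ x, HasDerivAt R₂ (R₂' x) x) (hR₂c : Continuous R₂')
    (hσ₁ : 0 < σ₁) (hσ₂ : 0 < σ₂)
    (hR₁sc : ∀ x y : ℝ, R₁ y + R₁' y * (x - y) + σ₁ / 2 * (x - y) ^ 2 ≤ R₁ x)
    (hR₂sc : ∀ x y : ℝ, R₂ y + R₂' y * (x - y) + σ₂ / 2 * (x - y) ^ 2 ≤ R₂ x)
    -- step sizes: nonnegative, nonincreasing, tending to zero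
    (ε₁ ε₂ : ℕ → ℝ)
    (hε₁0 : ∀ t, 0 ≤ ε₁ t) (hε₂0 : ∀ t, 0 ≤ ε₂ t)
    (hε₁mono : Antitone ε₁) (hε₂mono : Antitone ε₂)
    (hε₁lim : Filter.Tendsto ε₁ Filter.atTop (nhds 0))
    (hε₂lim : Filter.Tendsto ε₂ Filter.atTop (nhds 0))
    -- the OMD dynamics
    (y₁ y₂ p₁ p₂ r : ℕ → ℝ)
    (hr0 : r 0 ∈ Set.Icc pl pu)
    (hp₁proj : ∀ t, p₁ t = min (max (y₁ t) pl) pu)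
    (hp₂proj : ∀ t, p₂ t = min (max (y₂ t) pl) pu)
    (hy₁ : ∀ t, R₁' (y₁ (t + 1)) =
      R₁' (p₁ t) - ε₁ t * (2 * β₁ * p₁ t - (α₁ + δ₁ * p₂ t + γ₁ * r t)))
    (hy₂ : ∀ t, R₂' (y₂ (t + 1)) =
      R₂' (p₂ t) - ε₂ t * (2 * β₂ * p₂ t - (α₂ + δ₂ * p₁ t + γ₂ * r t)))
    (hrupd : ∀ t, r (t + 1) = a * r t + (1 - a) * (θ₁ * p₁ t + θ₂ * p₂ t)) :
    ∃ L₁ L₂ L₃ : ℝ,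
      Filter.Tendsto p₁ Filter.atTop (nhds L₁) ∧
      Filter.Tendsto p₂ Filter.atTop (nhds L₂) ∧
      Filter.Tendsto r Filter.atTop (nhds L₃) := by
  have hp₁ : ∀ t, pl ≤ p₁ t ∧ p₁ t ≤ pu := fun t => by
    rw [hp₁proj]; exact ⟨le_min (le_max_right _ _) hlu.le, min_le_right _ _⟩
  have hp₂ : ∀ t, pl ≤ p₂ t ∧ p₂ t ≤ pu := fun t => by
    rw [hp₂proj]; exact ⟨le_min (le_max_right _ _) hlu.le, min_le_right _ _⟩
  have hr : ∀ t, r t ∈ Set.Icc pl pu := by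
    intro t
    induction t with
    | zero => exact hr0
    | succ t ih =>
      rw [hrupd]
      exact (convex_Icc pl pu) ih ((convex_Icc pl pu) (hp₁ t) (hp₂ t) hθ₁.1.le hθ₂.1.le hθ)
        ha.1.le (sub_pos.2 ha.2).le (by ring)
  have contract : ∀ D, 0 < D → (EvOsc p₁ D ∧ EvOsc p₂ D ∧ EvOsc r D) →
      EvOsc p₁ (3 / 4 * D) ∧ EvOsc p₂ (3 / 4 * D) ∧ EvOsc r (3 / 4 * D) := by
    rintro D hD ⟨h1, h2, h3⟩
    have k1 := firm_contract hlu hδ₁ hγ₁ hm hβ₁ hσ₁ hR₁sc hε₁0 hε₁lim hp₁proj hy₁ hp₂ hr h2 h3 hD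
    have k2 := firm_contract hlu hδ₂ hγ₂ hm hβ₂ hσ₂ hR₂sc hε₂0 hε₂lim hp₂proj hy₂ hp₁ hr h1 h3 hD
    have ks := k1.linear (h := fun t => θ₁ * p₁ t + θ₂ * p₂ t) (c := 0) k2 hθ₁.1.le hθ₂.1.le
      (fun t => by ring)
    rw [← add_mul, hθ, one_mul] at ks
    exact ⟨k1.mono (by linarith), k2.mono (by linarith),
      ks.average ha.1 ha.2 hrupd (by linarith)⟩
  have hw : 0 < pu - pl := sub_pos.2 hlu
  have iter : ∀ n : ℕ, EvOsc p₁ ((3 / 4) ^ n * (pu - pl)) ∧ EvOsc p₂ ((3 / 4) ^ n * (pu - pl)) ∧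
      EvOsc r ((3 / 4) ^ n * (pu - pl)) := by
    intro n
    induction n with
    | zero =>
      simp only [pow_zero, one_mul]
      refine ⟨⟨pl, .of_forall fun t => ?_⟩, ⟨pl, .of_forall fun t => ?_⟩,
        ⟨pl, .of_forall fun t => ?_⟩⟩ <;> rw [add_sub_cancel]
      exacts [hp₁ t, hp₂ t, hr t]
    | succ n ih =>
      rw [pow_succ', mul_assoc]
      exact contract _ (by positivity) ih
  have small : ∀ D, 0 < D → ∃ n : ℕ, (3 / 4 : ℝ) ^ n * (pu - pl) ≤ D := by
    intro D hD
    obtain ⟨n, hn⟩ := exists_pow_lt_of_lt_one (div_pos hD hw) (show (3 / 4 : ℝ) < 1 by norm_num)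
    exact ⟨n, ((lt_div_iff₀ hw).1 hn).le⟩
  obtain ⟨L₁, hL₁⟩ := tendsto_of_evOsc fun D hD =>
    let ⟨n, hn⟩ := small D hD; (iter n).1.mono hn
  obtain ⟨L₂, hL₂⟩ := tendsto_of_evOsc fun D hD =>
    let ⟨n, hn⟩ := small D hD; (iter n).2.1.mono hn
  obtain ⟨L₃, hL₃⟩ := tendsto_of_evOsc fun D hD =>
    let ⟨n, hn⟩ := small D hD; (iter n).2.2.mono hn
  exact ⟨L₁, L₂, L₃, hL₁, hL₂, hL₃⟩
end

section
/- Assume there exists a Stable Nash Equilibrium (p_1*, p_2*, r*) in the open cube (p̲, p̄)³. If for i = 1,2 firm i runs the OMD dynamics with a σ_i-strongly convex, continuously differentiable regularizer R_i and a nonincreasing step-size sequence (ε_{i,t})_t with lim_{t→∞} ε_{i,t} = 0, Σ_{t=1}^∞ ε_{i,t} = ∞ and Σ_{t=1}^∞ ε_{i,t}² < ∞, then the sequence (p_{1,t}, p_{2,t}, r_t) converges to the unique interior SNE (p_1*, p_2*, r*). -/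
/-!
At an interior equilibrium each firm's first-order condition holds exactly, so with the errors
`e₁ = p₁ - p₁s`, `e₂ = p₂ - p₂s`, `e = r - rs` the gradients are
`g₁ = 2 β₁ e₁ - δ₁ e₂ - γ₁ e` and symmetrically for firm 2. Since `β ≥ 2 (δ + γ)`, the own-price
term dominates whenever `|e₁|` is a fixed fraction of a common bound `D` on the errors.

The convergence proof is a contraction argument on such a bound. Suppose that eventually all three
errors are at most `D`. Above the level `p₁s + 3D/8` the gradient is at least a positive constant,
so there the dual variable `R₁' (p₁ t)` decreases by a constant multiple of `ε₁ t`; as `∑ ε₁ = ∞`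
and `R₁'` is bounded below on the price interval, the price must drop under that level. As `ε₁ → 0`,
strong monotonicity of `R₁'` makes single steps arbitrarily short, so afterwards the price stays
below `p₁s + D/2` (`eventually_le_of_drift`; the lower side follows by reflection). The reference
price averages the two prices, hence its error is eventually at most `3D/4`
(`eventually_abs_average_le`). Iterating `D ↦ 3D/4` gives convergence. The argument treats the firms
separately, so the two step-size sequences need not be comparable.
-/

open Filter Topology Finset

/-- A projected mirror step with increasing mirror map `F` is eventually below `L + η`, if the
gradient is bounded and is eventually at least `κ > 0` whenever the iterate is at or above `L`. -/
theorem eventually_le_of_drift {pl pu L η κ G σ : ℝ} {F : ℝ → ℝ} {ε y p g : ℕ → ℝ}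
    (hlu : pl ≤ pu) (hL : pl ≤ L) (hη : 0 < η) (hκ : 0 < κ) (hσ : 0 < σ)
    (hF : ∀ x z : ℝ, z ≤ x → σ * (x - z) ≤ F x - F z)
    (hε0 : ∀ t, 0 ≤ ε t) (hεlim : Tendsto ε atTop (𝓝 0))
    (hεdiv : Tendsto (fun T => ∑ t ∈ range T, ε t) atTop atTop)
    (hp : ∀ t, p t = min (max (y t) pl) pu)
    (hy : ∀ t, F (y (t + 1)) = F (p t) - ε t * g t)
    (hG : ∀ t, |g t| ≤ G)
    (hg : ∀ᶠ t in atTop, L ≤ p t → κ ≤ g t) :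
    ∀ᶠ t in atTop, p t ≤ L + η := by
  have hlow : ∀ t, pl ≤ p t := fun t => by
    rw [hp t]; exact le_min (le_max_right _ _) hlu
  -- Strong monotonicity lets inequalities between values of `F` be read as inequalities of points.
  have hFinv : ∀ x z : ℝ, F x ≤ F z → x ≤ z := by
    intro x z h
    by_contra! hlt
    have h1 := hF x z hlt.le
    have h2 : 0 < σ * (x - z) := mul_pos hσ (sub_pos.2 hlt)
    linarith
  have hsmall : ∀ᶠ t in atTop, ε t * G < σ * η := by
    have h := hεlim.mul_const G
    rw [zero_mul] at h
    exact h.eventually_lt_const (mul_pos hσ hη)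
  obtain ⟨N, hN⟩ := eventually_atTop.1 (hg.and hsmall)
  have hple : ∀ t z, pl ≤ z → y t ≤ z → p t ≤ z := fun t z h1 h2 => by
    rw [hp t]; exact (min_le_left _ _).trans (max_le h2 h1)
  have hdown : ∀ t, N ≤ t → L ≤ p t → y (t + 1) ≤ p t := by
    intro t ht hLt
    apply hFinv
    have h1 := (hN t ht).1 hLt
    have h2 := mul_nonneg (hε0 t) (hκ.le.trans h1)
    rw [hy t]; linarith
  have hstep : ∀ t, N ≤ t → p t ≤ L + η → p (t + 1) ≤ L + η := by
    intro t ht hpt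
    apply hple _ _ (by linarith)
    rcases le_total L (p t) with h | h
    · exact (hdown t ht h).trans hpt
    · by_contra! hlt
      have h1 := hF (y (t + 1)) (p t) (by linarith)
      have h2 : σ * η < σ * (y (t + 1) - p t) := by
        apply mul_lt_mul_of_pos_left _ hσ; linarith
      have h3 : ε t * (-g t) ≤ ε t * G :=
        mul_le_mul_of_nonneg_left ((neg_le_abs _).trans (hG t)) (hε0 t)
      have h4 := (hN t ht).2
      rw [hy t] at h1
      linarith
  have hex : ∃ t, N ≤ t ∧ p t ≤ L + η := by
    by_contra! hno
    have hsum : ∀ T, N ≤ T →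
        F (p T) + κ * ∑ t ∈ range T, ε t ≤ F (p N) + κ * ∑ t ∈ range N, ε t := by
      intro T hT
      induction T, hT using Nat.le_induction with
      | base => exact le_rfl
      | succ T hT ih =>
        have hLT : L ≤ p T := by linarith [hno T hT]
        have hnext := hno (T + 1) (by omega)
        -- The iterate is above `L ≥ pl`, so the projection at `pl` was inactive.
        have hpy : p (T + 1) ≤ y (T + 1) := by
          by_contra! hlt
          rcases le_total (y (T + 1)) pl with h | h
          · linarith [hple (T + 1) pl le_rfl h]
          · linarith [hple (T + 1) _ h le_rfl]
        have h1 := hF _ _ hpy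
        have h2 : 0 ≤ σ * (y (T + 1) - p (T + 1)) := mul_nonneg hσ.le (by linarith)
        have h3 : ε T * κ ≤ ε T * g T := mul_le_mul_of_nonneg_left ((hN T hT).1 hLT) (hε0 T)
        rw [hy T] at h1
        rw [sum_range_succ]
        linarith
    have hbig := (hεdiv.const_mul_atTop hκ).eventually_gt_atTop
      (F (p N) + κ * ∑ t ∈ range N, ε t - F pl)
    obtain ⟨T, hT1, hT2⟩ := (hbig.and (eventually_ge_atTop N)).exists
    have h1 := hsum T hT2
    have h2 := hF (p T) pl (hlow T)
    have h3 : 0 ≤ σ * (p T - pl) := mul_nonneg hσ.le (by linarith [hlow T])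
    linarith
  obtain ⟨T, hT, hpT⟩ := hex
  refine eventually_atTop.2 ⟨T, fun t ht => ?_⟩
  induction t, ht using Nat.le_induction with
  | base => exact hpT
  | succ t ht ih => exact hstep t (hT.trans ht) ih

/-- An exponential moving average of inputs eventually bounded by `D` is eventually bounded by any
larger constant. -/
theorem eventually_abs_average_le {a D D' : ℝ} {u w : ℕ → ℝ} (ha0 : 0 < a) (ha1 : a < 1)
    (hD : D < D') (hu : ∀ t, u (t + 1) = a * u t + (1 - a) * w t)
    (hw : ∀ᶠ t in atTop, |w t| ≤ D) : ∀ᶠ t in atTop, |u t| ≤ D' := by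
  obtain ⟨N, hN⟩ := eventually_atTop.1 hw
  have hD0 : 0 ≤ D := (abs_nonneg _).trans (hN N le_rfl)
  have key : ∀ k, |u (N + k)| ≤ D + a ^ k * |u N| := by
    intro k
    induction k with
    | zero => simpa using hD0
    | succ k ih =>
      have h1 : |u (N + (k + 1))| ≤ a * |u (N + k)| + (1 - a) * |w (N + k)| := by
        rw [← add_assoc, hu]
        refine (abs_add_le _ _).trans_eq ?_
        rw [abs_mul, abs_mul, abs_of_pos ha0, abs_of_pos (sub_pos.2 ha1)]
      have h2 := mul_le_mul_of_nonneg_left ih ha0.le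
      have h3 := mul_le_mul_of_nonneg_left (hN (N + k) (by omega)) (sub_pos.2 ha1).le
      rw [pow_succ]
      linarith
  have hlim : Tendsto (fun k => D + a ^ k * |u N|) atTop (𝓝 D) := by
    simpa using ((tendsto_pow_atTop_nhds_zero_of_lt_one ha0.le ha1).mul_const |u N|).const_add D
  obtain ⟨K, hK⟩ := eventually_atTop.1 (hlim.eventually_lt_const hD)
  refine eventually_atTop.2 ⟨N + K, fun t ht => ?_⟩
  obtain ⟨k, rfl⟩ := Nat.exists_eq_add_of_le (show N ≤ t by omega)
  exact (key k).trans (hK k (by omega)).le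

/-- An interior best response satisfies the first-order condition. -/
theorem first_order_of_best_response {pl pu β c x : ℝ} (hx : x ∈ Set.Ioo pl pu)
    (h : ∀ p ∈ Set.Icc pl pu, p * (c - β * p) ≤ x * (c - β * x)) : c = 2 * β * x := by
  have hd : HasDerivAt (fun p => p * (c - β * p)) (1 * (c - β * x) + x * (-(β * 1))) x :=
    (hasDerivAt_id x).mul (((hasDerivAt_id x).const_mul β).const_sub c)
  have hmax : IsLocalMax (fun p => p * (c - β * p)) x := by
    filter_upwards [Icc_mem_nhds hx.1 hx.2] with p hp using h p hp
  linarith [hmax.hasDerivAt_eq_zero hd]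

/-- The derivative of a strongly convex function is strongly monotone. -/
theorem strong_mono_of_strong_convex {R R' : ℝ → ℝ} {σ : ℝ}
    (hsc : ∀ x y : ℝ, R y + R' y * (x - y) + σ / 2 * (x - y) ^ 2 ≤ R x) (x z : ℝ) (hzx : z ≤ x) :
    σ * (x - z) ≤ R' x - R' z := by
  rcases hzx.eq_or_lt with rfl | hlt
  · simp
  · have h1 := hsc x z
    have h2 := hsc z x
    have h3 : σ * (x - z) * (x - z) ≤ (R' x - R' z) * (x - z) := by nlinarith
    exact le_of_mul_le_mul_right h3 (sub_pos.2 hlt)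

/-- One firm's half of the contraction: if the opponent's price `q` and the reference price `r` are
eventually within `D` of equilibrium, the firm's own price is eventually within `D / 2`. -/
theorem eventually_abs_own_price_le {pl pu α β δ γ σ ps qs rs D : ℝ} {F : ℝ → ℝ}
    {ε y p q r : ℕ → ℝ}
    (hδ : 0 < δ) (hγ : 0 < γ) (hβ : 2 * (δ + γ) ≤ β) (hσ : 0 < σ) (hD : 0 < D)
    (hps : ps ∈ Set.Ioo pl pu) (hfoc : α + δ * qs + γ * rs = 2 * β * ps)
    (hF : ∀ x z : ℝ, z ≤ x → σ * (x - z) ≤ F x - F z)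
    (hε0 : ∀ t, 0 ≤ ε t) (hεlim : Tendsto ε atTop (𝓝 0))
    (hεdiv : Tendsto (fun T => ∑ t ∈ range T, ε t) atTop atTop)
    (hp : ∀ t, p t = min (max (y t) pl) pu)
    (hy : ∀ t, F (y (t + 1)) = F (p t) - ε t * (2 * β * p t - (α + δ * q t + γ * r t)))
    (hqP : ∀ t, q t ∈ Set.Icc pl pu) (hrP : ∀ t, r t ∈ Set.Icc pl pu)
    (hq : ∀ᶠ t in atTop, |q t - qs| ≤ D) (hr : ∀ᶠ t in atTop, |r t - rs| ≤ D) :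
    ∀ᶠ t in atTop, |p t - ps| ≤ D / 2 := by
  have hlu : pl ≤ pu := (hps.1.trans hps.2).le
  have hpP : ∀ t, p t ∈ Set.Icc pl pu := fun t => by
    rw [hp t]; exact ⟨le_min (le_max_right _ _) hlu, min_le_right _ _⟩
  set g : ℕ → ℝ := fun t => 2 * β * p t - (α + δ * q t + γ * r t) with hgdef
  obtain ⟨G, hG⟩ : ∃ G, ∀ t, |g t| ≤ G := by
    have hβ0 : 0 < β := by linarith
    refine ⟨max (2 * β * pu - (α + δ * pl + γ * pl)) (-(2 * β * pl - (α + δ * pu + γ * pu))),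
      fun t => abs_le.2 ?_⟩
    have h1 := mul_le_mul_of_nonneg_left (hpP t).1 hβ0.le
    have h2 := mul_le_mul_of_nonneg_left (hpP t).2 hβ0.le
    have h3 := mul_le_mul_of_nonneg_left (hqP t).1 hδ.le
    have h4 := mul_le_mul_of_nonneg_left (hqP t).2 hδ.le
    have h5 := mul_le_mul_of_nonneg_left (hrP t).1 hγ.le
    have h6 := mul_le_mul_of_nonneg_left (hrP t).2 hγ.le
    constructor
    · rw [neg_le]
      refine le_trans ?_ (le_max_right _ _)
      simp only [hgdef]; linarith
    · refine le_trans ?_ (le_max_left _ _)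
      simp only [hgdef]; linarith
  have hκ : 0 < (δ + γ) * D / 2 := by positivity
  have hβD : 2 * (δ + γ) * (3 / 8 * D) ≤ β * (3 / 8 * D) :=
    mul_le_mul_of_nonneg_right hβ (by positivity)
  have hβ0 : 0 < β := by linarith
  have hup : ∀ᶠ t in atTop, p t ≤ ps + 3 / 8 * D + D / 8 := by
    refine eventually_le_of_drift (g := g) hlu (by linarith [hps.1]) (by positivity) hκ hσ hF hε0
      hεlim hεdiv hp hy hG ?_
    filter_upwards [hq, hr] with t hqt hrt hLt
    have h1 := mul_le_mul_of_nonneg_left (abs_le.1 hqt).2 hδ.le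
    have h2 := mul_le_mul_of_nonneg_left (abs_le.1 hrt).2 hγ.le
    have h3 := mul_le_mul_of_nonneg_left hLt hβ0.le
    simp only [hgdef]; linarith
  -- The reflection `x ↦ -x` turns the lower bound into an upper bound.
  have hdn : ∀ᶠ t in atTop, -p t ≤ -ps + 3 / 8 * D + D / 8 := by
    refine eventually_le_of_drift (p := fun t => -p t) (y := fun t => -y t) (g := fun t => -g t)
      (F := fun x => -F (-x)) (pl := -pu) (pu := -pl) (G := G) (neg_le_neg hlu)
      (by linarith [hps.2]) (by positivity) hκ hσ ?_ hε0 hεlim hεdiv ?_ ?_ ?_ ?_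
    · intro x z hzx
      have := hF (-z) (-x) (neg_le_neg hzx)
      linarith
    · intro t
      rw [hp t, ← max_neg_neg, ← min_neg_neg, max_min_distrib_right,
        max_eq_left (neg_le_neg hlu)]
    · intro t
      simp only [neg_neg]
      rw [hy t]; ring
    · intro t
      rw [abs_neg]; exact hG t
    · filter_upwards [hq, hr] with t hqt hrt hLt
      have h1 := mul_le_mul_of_nonneg_left (abs_le.1 hqt).1 hδ.le
      have h2 := mul_le_mul_of_nonneg_left (abs_le.1 hrt).1 hγ.le
      have h3 := mul_le_mul_of_nonneg_left hLt hβ0.le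
      simp only [hgdef]; linarith
  filter_upwards [hup, hdn] with t h1 h2
  exact abs_le.2 ⟨by linarith, by linarith⟩

/-- Under an interior SNE assumption, if both firms run OMD with
strongly convex, continuously differentiable regularizers and nonincreasing step
sizes tending to zero with `Σ εᵢₜ = ∞` and `Σ εᵢₜ² < ∞`, then `(p₁ₜ, p₂ₜ, rₜ)`
converges to the unique interior SNE. -/
theorem stmt_8
    (pl pu : ℝ) (hpl : 0 < pl) (hlu : pl < pu)
    (α₁ α₂ β₁ β₂ δ₁ δ₂ γ₁ γ₂ m a θ₁ θ₂ σ₁ σ₂ : ℝ)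
    (hα₁ : 0 < α₁) (hα₂ : 0 < α₂) (hδ₁ : 0 < δ₁) (hδ₂ : 0 < δ₂)
    (hγ₁ : 0 < γ₁) (hγ₂ : 0 < γ₂) (hm : 2 ≤ m)
    (hβ₁ : m * (δ₁ + γ₁) ≤ β₁) (hβ₂ : m * (δ₂ + γ₂) ≤ β₂)
    (ha : a ∈ Set.Ioo (0 : ℝ) 1) (hθ₁ : θ₁ ∈ Set.Ioo (0 : ℝ) 1)
    (hθ₂ : θ₂ ∈ Set.Ioo (0 : ℝ) 1) (hθ : θ₁ + θ₂ = 1)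
    -- existence of an interior Stable Nash Equilibrium
    (p₁s p₂s rs : ℝ)
    (hp₁s : p₁s ∈ Set.Ioo pl pu) (hp₂s : p₂s ∈ Set.Ioo pl pu) (hrs : rs ∈ Set.Ioo pl pu)
    (hBR₁ : ∀ p ∈ Set.Icc pl pu,
      p * (α₁ - β₁ * p + δ₁ * p₂s + γ₁ * rs) ≤ p₁s * (α₁ - β₁ * p₁s + δ₁ * p₂s + γ₁ * rs))
    (hBR₂ : ∀ p ∈ Set.Icc pl pu,
      p * (α₂ - β₂ * p + δ₂ * p₁s + γ₂ * rs) ≤ p₂s * (α₂ - β₂ * p₂s + δ₂ * p₁s + γ₂ * rs))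
    (hstab : rs = θ₁ * p₁s + θ₂ * p₂s)
    -- regularizers: continuously differentiable and strongly convex
    (R₁ R₂ R₁' R₂' : ℝ → ℝ)
    (hR₁d : ∀ x, HasDerivAt R₁ (R₁' x) x) (hR₁c : Continuous R₁')
    (hR₂d : ∀ x, HasDerivAt R₂ (R₂' x) x) (hR₂c : Continuous R₂')
    (hσ₁ : 0 < σ₁) (hσ₂ : 0 < σ₂)
    (hR₁sc : ∀ x y : ℝ, R₁ y + R₁' y * (x - y) + σ₁ / 2 * (x - y) ^ 2 ≤ R₁ x)
    (hR₂sc : ∀ x y : ℝ, R₂ y + R₂' y * (x - y) + σ₂ / 2 * (x - y) ^ 2 ≤ R₂ x)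
    -- step sizes: nonnegative, nonincreasing, tending to zero
    (ε₁ ε₂ : ℕ → ℝ)
    (hε₁0 : ∀ t, 0 ≤ ε₁ t) (hε₂0 : ∀ t, 0 ≤ ε₂ t)
    (hε₁mono : Antitone ε₁) (hε₂mono : Antitone ε₂)
    (hε₁lim : Filter.Tendsto ε₁ Filter.atTop (nhds 0))
    (hε₂lim : Filter.Tendsto ε₂ Filter.atTop (nhds 0))
    (hε₁div : Filter.Tendsto (fun T => ∑ t ∈ Finset.range T, ε₁ t) Filter.atTop Filter.atTop)
    (hε₂div : Filter.Tendsto (fun T => ∑ t ∈ Finset.range T, ε₂ t) Filter.atTop Filter.atTop)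
    (hε₁sq : Summable (fun t => (ε₁ t) ^ 2))
    (hε₂sq : Summable (fun t => (ε₂ t) ^ 2))
    -- the OMD dynamics
    (y₁ y₂ p₁ p₂ r : ℕ → ℝ)
    (hr0 : r 0 ∈ Set.Icc pl pu)
    (hp₁proj : ∀ t, p₁ t = min (max (y₁ t) pl) pu)
    (hp₂proj : ∀ t, p₂ t = min (max (y₂ t) pl) pu)
    (hy₁ : ∀ t, R₁' (y₁ (t + 1)) =
      R₁' (p₁ t) - ε₁ t * (2 * β₁ * p₁ t - (α₁ + δ₁ * p₂ t + γ₁ * r t)))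
    (hy₂ : ∀ t, R₂' (y₂ (t + 1)) =
      R₂' (p₂ t) - ε₂ t * (2 * β₂ * p₂ t - (α₂ + δ₂ * p₁ t + γ₂ * r t)))
    (hrupd : ∀ t, r (t + 1) = a * r t + (1 - a) * (θ₁ * p₁ t + θ₂ * p₂ t)) :
    Filter.Tendsto p₁ Filter.atTop (nhds p₁s) ∧
    Filter.Tendsto p₂ Filter.atTop (nhds p₂s) ∧
    Filter.Tendsto r Filter.atTop (nhds rs) := by
  obtain ⟨ha0, ha1⟩ := ha
  have hfoc₁ : α₁ + δ₁ * p₂s + γ₁ * rs = 2 * β₁ * p₁s :=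
    first_order_of_best_response hp₁s fun p hp => by
      have := hBR₁ p hp
      linarith
  have hfoc₂ : α₂ + δ₂ * p₁s + γ₂ * rs = 2 * β₂ * p₂s :=
    first_order_of_best_response hp₂s fun p hp => by
      have := hBR₂ p hp
      linarith
  have hβ₁' : 2 * (δ₁ + γ₁) ≤ β₁ :=
    (mul_le_mul_of_nonneg_right hm (by positivity)).trans hβ₁
  have hβ₂' : 2 * (δ₂ + γ₂) ≤ β₂ :=
    (mul_le_mul_of_nonneg_right hm (by positivity)).trans hβ₂
  have hp₁P : ∀ t, p₁ t ∈ Set.Icc pl pu := fun t => by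
    rw [hp₁proj t]; exact ⟨le_min (le_max_right _ _) hlu.le, min_le_right _ _⟩
  have hp₂P : ∀ t, p₂ t ∈ Set.Icc pl pu := fun t => by
    rw [hp₂proj t]; exact ⟨le_min (le_max_right _ _) hlu.le, min_le_right _ _⟩
  have hrP : ∀ t, r t ∈ Set.Icc pl pu := by
    intro t
    induction t with
    | zero => exact hr0
    | succ t ih =>
      rw [hrupd t]
      have hmix := convex_Icc pl pu (hp₁P t) (hp₂P t) hθ₁.1.le hθ₂.1.le hθ
      exact convex_Icc pl pu ih hmix ha0.le (sub_pos.2 ha1).le (by ring)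
  have hF₁ := strong_mono_of_strong_convex hR₁sc
  have hF₂ := strong_mono_of_strong_convex hR₂sc
  have hD₀ : 0 < pu - pl := sub_pos.2 hlu
  have main : ∀ n : ℕ, ∀ᶠ t in Filter.atTop,
      |p₁ t - p₁s| ≤ (pu - pl) * (3 / 4) ^ n ∧ |p₂ t - p₂s| ≤ (pu - pl) * (3 / 4) ^ n ∧
        |r t - rs| ≤ (pu - pl) * (3 / 4) ^ n := by
    intro n
    induction n with
    | zero =>
      have hdist : ∀ x z : ℝ, x ∈ Set.Icc pl pu → z ∈ Set.Ioo pl pu → |x - z| ≤ pu - pl :=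
        fun x z hx hz => abs_le.2
          ⟨by linarith [hx.1, hx.2, hz.1, hz.2], by linarith [hx.1, hx.2, hz.1, hz.2]⟩
      refine Filter.Eventually.of_forall fun t => ?_
      rw [pow_zero, mul_one]
      exact ⟨hdist _ _ (hp₁P t) hp₁s, hdist _ _ (hp₂P t) hp₂s, hdist _ _ (hrP t) hrs⟩
    | succ n ih =>
      have hD : 0 < (pu - pl) * (3 / 4) ^ n := by positivity
      rw [pow_succ, ← mul_assoc]
      generalize (pu - pl) * (3 / 4) ^ n = D at hD ih ⊢
      have ih₁ := ih.mono fun t h => h.1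
      have ih₂ := ih.mono fun t h => h.2.1
      have ihr := ih.mono fun t h => h.2.2
      have h₁ := eventually_abs_own_price_le hδ₁ hγ₁ hβ₁' hσ₁ hD hp₁s hfoc₁ hF₁ hε₁0 hε₁lim
        hε₁div hp₁proj hy₁ hp₂P hrP ih₂ ihr
      have h₂ := eventually_abs_own_price_le hδ₂ hγ₂ hβ₂' hσ₂ hD hp₂s hfoc₂ hF₂ hε₂0 hε₂lim
        hε₂div hp₂proj hy₂ hp₁P hrP ih₁ ihr
      have hr : ∀ᶠ t in Filter.atTop, |r t - rs| ≤ D * (3 / 4) := by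
        refine eventually_abs_average_le (a := a) (D := D / 2)
          (w := fun t => θ₁ * (p₁ t - p₁s) + θ₂ * (p₂ t - p₂s)) ha0 ha1 (by linarith) ?_ ?_
        · intro t
          rw [hrupd t, hstab]; ring
        · filter_upwards [h₁, h₂] with t e₁ e₂
          rw [abs_le] at e₁ e₂
          exact abs_le.2 (convex_Icc (-(D / 2)) (D / 2) e₁ e₂ hθ₁.1.le hθ₂.1.le hθ)
      filter_upwards [h₁, h₂, hr] with t e₁ e₂ e
      exact ⟨by linarith, by linarith, e⟩
  have conv : ∀ (u : ℕ → ℝ) (l : ℝ),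
      (∀ n : ℕ, ∀ᶠ t in Filter.atTop, |u t - l| ≤ (pu - pl) * (3 / 4) ^ n) →
        Filter.Tendsto u Filter.atTop (nhds l) := by
    intro u l hu
    rw [Metric.tendsto_nhds]
    intro η hη
    have hlim : Filter.Tendsto (fun n : ℕ => (pu - pl) * (3 / 4 : ℝ) ^ n) Filter.atTop (nhds 0) := by
      simpa using (tendsto_pow_atTop_nhds_zero_of_lt_one (r := (3 / 4 : ℝ)) (by norm_num)
        (by norm_num)).const_mul (pu - pl)
    obtain ⟨n, hn⟩ := (hlim.eventually_lt_const hη).exists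
    filter_upwards [hu n] with t ht
    rw [Real.dist_eq]
    exact ht.trans_lt hn
  exact ⟨conv _ _ fun n => (main n).mono fun t h => h.1,
    conv _ _ fun n => (main n).mono fun t h => h.2.1,
    conv _ _ fun n => (main n).mono fun t h => h.2.2⟩
end

section
/- Let R : ℝ → ℝ be continuously differentiable and σ-strongly convex for some σ > 0, i.e. R(x) ≥ R(y) + R'(y)(x − y) + (σ/2)(x − y)² for all x, y ∈ ℝ, and let D(x, y) := R(x) − R(y) − R'(y)(x − y) be the associated Bregman divergence. Let 0 < p̲ < p̄, P = [p̲, p̄], and Π_P(z) = min(max(z, p̲), p̄). Let p ∈ P, g ∈ ℝ, ε ≥ 0, and suppose y ∈ ℝ satisfies R'(y) = R'(p) − εg; set q = Π_P(y). Then for every z ∈ P, D(z, q) ≤ D(z, p) + εg(z − p) + ε²g²/(2σ). -/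
/-!
The projected point `q` satisfies the variational inequality
`(R' q - R' y) * (z - q) ≥ 0` for `z ∈ P`, because `R'` is monotone and `q` is either `y` itself
or the endpoint of `P` that separates `y` from `P`. Substituting `R' y = R' p - ε g` gives
`D z q - D z p ≤ ε g (z - p) + ε g (p - q) - D q p`. Strong convexity bounds `D q p` below by
`σ / 2 * (q - p) ^ 2`, and Young's inequality absorbs the cross term `ε g (p - q)`.
-/

/-- The one-step descent inequality for a projected online mirror
descent update with step size `ε` and gradient feedback `g`:
`D(z, q) ≤ D(z, p) + ε g (z − p) + ε² g² / (2σ)` for all `z ∈ P`. -/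
theorem stmt_13
    (σ : ℝ) (hσ : 0 < σ)
    (R R' : ℝ → ℝ)
    (hRd : ∀ x, HasDerivAt R (R' x) x) (hRc : Continuous R')
    (hsc : ∀ x y : ℝ, R y + R' y * (x - y) + σ / 2 * (x - y) ^ 2 ≤ R x)
    (D : ℝ → ℝ → ℝ)
    (hD : ∀ x y, D x y = R x - R y - R' y * (x - y))
    (pl pu : ℝ) (hpl : 0 < pl) (hlu : pl < pu)
    (p g ε y q : ℝ)
    (hp : p ∈ Set.Icc pl pu) (hε : 0 ≤ ε)
    (hy : R' y = R' p - ε * g)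
    (hq : q = min (max y pl) pu) :
    ∀ z ∈ Set.Icc pl pu,
      D z q ≤ D z p + ε * g * (z - p) + ε ^ 2 * g ^ 2 / (2 * σ) := by
  rintro z ⟨hzl, hzu⟩
  have mono : ∀ a b, a ≤ b → R' a ≤ R' b := by
    intro a b hab
    rcases hab.eq_or_lt with rfl | hlt
    · exact le_rfl
    -- The strong convexity inequalities at `(a, b)` and `(b, a)` add up to
    -- `σ * (b - a) ^ 2 ≤ (R' b - R' a) * (b - a)`.
    · have h1 := hsc a b
      have h2 := hsc b a
      have h3 : 0 ≤ σ * (b - a) ^ 2 := by positivity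
      have h4 : 0 ≤ (R' b - R' a) * (b - a) := by linarith
      have h5 := nonneg_of_mul_nonneg_left h4 (sub_pos.2 hlt)
      linarith
  have opt : 0 ≤ (R' q - R' y) * (z - q) := by
    rcases le_total y pl with h | h
    · have hq' : q = pl := by rw [hq, max_eq_right h, min_eq_left hlu.le]
      rw [hq']
      exact mul_nonneg (sub_nonneg.2 (mono _ _ h)) (sub_nonneg.2 hzl)
    · rcases le_total y pu with h' | h'
      · have hq' : q = y := by rw [hq, max_eq_left h, min_eq_left h']
        simp [hq']
      · have hq' : q = pu := by rw [hq, max_eq_left h, min_eq_right h']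
        rw [hq']
        exact mul_nonneg_of_nonpos_of_nonpos (sub_nonpos.2 (mono _ _ h')) (sub_nonpos.2 hzu)
  have young : ε * g * (p - q) - σ / 2 * (q - p) ^ 2 ≤ ε ^ 2 * g ^ 2 / (2 * σ) := by
    rw [le_div_iff₀ (by positivity)]
    nlinarith [sq_nonneg (ε * g - σ * (p - q))]
  rw [hy] at opt
  have hqp := hsc q p
  rw [hD, hD]
  linarith
end

section
/- Let a ∈ (0,1), let ρ = ⌈a/(1−a)⌉ + 1 and t_a = ⌈ (a/(1−a))·(ρ + 1) / (ρ − a/(1−a)) ⌉. Then for every integer t ≥ ρ + t_a, Σ_{τ = ρ + t_a}^{t} a^{−τ}/τ ≤ (1/(1−a)) · a^{−t}/(t − ρ). -/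
/-!
Write `c = a / (1 - a)`, so that `1 / (1 - a) = 1 + c` and `a * (1 + c) = c`. The bound is proved by
induction on `t`. At `t = ρ + ta` it holds because `0 < ta ≤ ρ + ta` and `1 ≤ 1 + c`. With
`s = t - ρ`, after multiplication by `a ^ (t + 1)`, the step from `t` to `t + 1` reads
`c / s + 1 / (s + 1 + ρ) ≤ (1 + c) / (s + 1)`. Clearing denominators turns this into
`c * (ρ + 1) ≤ (ρ - c) * s`, which holds for all `s ≥ ta` by the choice of `ta`.
-/

/-- The induction step, multiplied by `a ^ (t + 1)`, with `s = t - ρ` and `c = a / (1 - a)`. -/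
theorem step_ineq {c r s : ℝ} (hr : 0 ≤ r) (hs : 0 < s)
    (h : c * (r + 1) ≤ (r - c) * s) :
    c / s + 1 / (s + 1 + r) ≤ (1 + c) / (s + 1) := by
  have key : (1 + c) / (s + 1) - (c / s + 1 / (s + 1 + r)) =
      ((r - c) * s - c * (r + 1)) / (s * (s + 1) * (s + 1 + r)) := by
    field_simp
    ring
  have : 0 ≤ ((r - c) * s - c * (r + 1)) / (s * (s + 1) * (s + 1 + r)) :=
    div_nonneg (by linarith) (by positivity)
  linarith


/-- For `a ∈ (0,1)`, `ρ = ⌈a/(1−a)⌉ + 1` and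
`t_a = ⌈(a/(1−a))(ρ+1)/(ρ − a/(1−a))⌉`, for every `t ≥ ρ + t_a` one has
`Σ_{τ=ρ+t_a}^{t} a^{−τ}/τ ≤ (1/(1−a)) · a^{−t}/(t − ρ)`. -/
theorem stmt_14
    (a : ℝ) (ha : a ∈ Set.Ioo (0 : ℝ) 1)
    (ρ ta : ℕ)
    (hρ : ρ = ⌈a / (1 - a)⌉₊ + 1)
    (hta : ta = ⌈(a / (1 - a)) * ((ρ : ℝ) + 1) / ((ρ : ℝ) - a / (1 - a))⌉₊)
    (t : ℕ) (ht : ρ + ta ≤ t) :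
    ∑ τ ∈ Finset.Icc (ρ + ta) t, a ^ (-(τ : ℤ)) / (τ : ℝ) ≤
      (1 / (1 - a)) * a ^ (-(t : ℤ)) / ((t : ℝ) - (ρ : ℝ)) := by
  obtain ⟨ha0, ha1⟩ := ha
  have h1a : 0 < 1 - a := by linarith
  obtain ⟨c, hc⟩ : ∃ c, c = a / (1 - a) := ⟨_, rfl⟩
  have hc0 : 0 < c := hc ▸ div_pos ha0 h1a
  have hc1 : 1 / (1 - a) = 1 + c := by rw [hc]; field_simp; ring
  have hac : c = a * (1 + c) := by rw [hc]; field_simp; ring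
  rw [← hc] at hρ hta
  rw [hc1]
  have hρc : c < ρ := by
    have := Nat.le_ceil c
    rw [hρ]; push_cast; linarith
  have hpos : 0 < c * ((ρ : ℝ) + 1) / (ρ - c) := div_pos (by positivity) (by linarith)
  have hta0 : (0 : ℝ) < ta := by
    rw [hta]; exact_mod_cast Nat.ceil_pos.mpr hpos
  have hta1 : c * ((ρ : ℝ) + 1) ≤ (ρ - c) * ta := by
    have := hta ▸ Nat.le_ceil (c * ((ρ : ℝ) + 1) / (ρ - c))
    rw [div_le_iff₀ (by linarith)] at this
    linarith
  induction t, ht using Nat.le_induction with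
  | base =>
    have hp : 0 < a ^ (-((ρ + ta : ℕ) : ℤ)) := zpow_pos ha0 _
    rw [Finset.Icc_self, Finset.sum_singleton]
    push_cast at hp ⊢
    rw [add_sub_cancel_left]
    apply div_le_div₀ (by positivity) _ hta0 (by linarith)
    exact le_mul_of_one_le_left hp.le (by linarith)
  | succ t ht ih =>
    have hp : 0 < a ^ (-((t + 1 : ℕ) : ℤ)) := zpow_pos ha0 _
    have hpow : a ^ (-(t : ℤ)) = a ^ (-((t + 1 : ℕ) : ℤ)) * a := by
      rw [← zpow_add_one₀ ha0.ne']; congr 1; push_cast; ring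
    have hts : (ta : ℝ) ≤ t - ρ := by
      have : ((ρ + ta : ℕ) : ℝ) ≤ t := by exact_mod_cast ht
      push_cast at this; linarith
    have hstep := step_ineq (c := c) (r := ρ) (s := t - ρ) (by positivity) (by linarith)
      (hta1.trans (mul_le_mul_of_nonneg_left hts (by linarith)))
    have hmul := mul_le_mul_of_nonneg_left hstep hp.le
    rw [Finset.sum_Icc_succ_top (by omega)]
    refine (add_le_add_left ih _).trans ?_
    rw [hpow]
    generalize a ^ (-((t + 1 : ℕ) : ℤ)) = P at hmul ⊢
    have e1 : (1 + c) * (P * a) = P * c := by linear_combination -P * hac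
    rw [e1]
    push_cast
    have e2 : (t : ℝ) - ρ + 1 + ρ = t + 1 := by ring
    have e3 : (t : ℝ) + 1 - ρ = t - ρ + 1 := by ring
    rw [e2] at hmul
    rw [e3]
    calc P * c / ((t : ℝ) - ρ) + P / (t + 1)
        = P * (c / ((t : ℝ) - ρ) + 1 / (t + 1)) := by ring
      _ ≤ P * ((1 + c) / ((t : ℝ) - ρ + 1)) := hmul
      _ = (1 + c) * P / ((t : ℝ) - ρ + 1) := by ring
end

section
/- For every m > 2 and every σ > σ_0 := max{ 6(2m² + 1)/(2m − 1)², (2m² + 7)²/(8m³ − 36m + 8) }, there exists z > 0 such that simultaneously 2σ(2 + 1/m²)z² − σ(2 − 1/m)z + 3/4 < 0 and (4σ/m²)z² + (σ/m)z − 1/4 < 0. -/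
/-!
Write `f` and `g` for the first and the second quadratic. Their constant terms cancel in
`f + 3 g = σ z ((4 + 14 / m²) z - (2 - 4 / m))`, which is negative for `0 < z < c`, where
`c = m (m - 2) / (2 m² + 7)`. The bound `σ > (2 m² + 7)² / (8 m³ - 36 m + 8)` says exactly that
`g c > 0`. As `g 0 < 0`, the quadratic `g` has a root `r` in `(0, c)`, and there `f r < 0`.
Since `g` is increasing on the positive axis, any `z < r` close enough to `r` makes both negative.
-/

open Set Filter Topology in
/-- For every `m > 2` and `σ > σ₀`, there exists `z > 0` making
both quadratics `f_{1,m}` and `f_{n,m}` (with σ₁ = σ₂ = σ) negative. -/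
theorem stmt_17
    (m σ : ℝ) (hm : 2 < m)
    (hσ : max (6 * (2 * m ^ 2 + 1) / (2 * m - 1) ^ 2)
      ((2 * m ^ 2 + 7) ^ 2 / (8 * m ^ 3 - 36 * m + 8)) < σ) :
    ∃ z : ℝ, 0 < z ∧
      2 * σ * (2 + 1 / m ^ 2) * z ^ 2 - σ * (2 - 1 / m) * z + 3 / 4 < 0 ∧
      (4 * σ / m ^ 2) * z ^ 2 + (σ / m) * z - 1 / 4 < 0 := by
  have hm0 : 0 < m := by linarith
  have hm2 : 0 < m - 2 := by linarith
  have hD : 0 < 8 * m ^ 3 - 36 * m + 8 := by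
    have h : 0 < 4 * (m - 2) * (2 * m ^ 2 + 4 * m - 1) :=
      mul_pos (by linarith) (by nlinarith)
    linarith
  have hσ2 := (max_lt_iff.mp hσ).2
  have hσ0 : 0 < σ := lt_trans (by positivity) hσ2
  rw [div_lt_iff₀ hD] at hσ2
  set f : ℝ → ℝ := fun z =>
    2 * σ * (2 + 1 / m ^ 2) * z ^ 2 - σ * (2 - 1 / m) * z + 3 / 4 with hf
  set g : ℝ → ℝ := fun z => (4 * σ / m ^ 2) * z ^ 2 + (σ / m) * z - 1 / 4 with hg
  have hfc : Continuous f := by fun_prop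
  have hgc : Continuous g := by fun_prop
  set c : ℝ := m * (m - 2) / (2 * m ^ 2 + 7) with hc
  have hc0 : 0 < c := by positivity
  have hg0 : g 0 < 0 := by norm_num [hg]
  have hgpos : 0 < g c := by
    have h : g c = (σ * (8 * m ^ 3 - 36 * m + 8) - (2 * m ^ 2 + 7) ^ 2)
        / (4 * (2 * m ^ 2 + 7) ^ 2) := by
      simp only [hg, hc]
      field_simp
      ring
    rw [h]
    exact div_pos (by linarith) (by positivity)
  obtain ⟨r, ⟨hr0, hrc⟩, hgr⟩ := intermediate_value_Ioo hc0.le hgc.continuousOn ⟨hg0, hgpos⟩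
  have hfr : f r < 0 := by
    have h : f r + 3 * g r = σ * r * ((2 * (2 * m ^ 2 + 7) / m ^ 2) * (r - c)) := by
      simp only [hf, hg, hc]
      field_simp
      ring
    rw [hgr, mul_zero, add_zero] at h
    rw [h]
    exact mul_neg_of_pos_of_neg (by positivity)
      (mul_neg_of_pos_of_neg (by positivity) (by linarith))
  have hev : ∀ᶠ z in 𝓝[<] r, f z < 0 :=
    nhdsWithin_le_nhds (hfc.continuousAt.eventually_lt_const hfr)
  obtain ⟨z, hfz, hz0, hzr⟩ := (hev.and (Ioo_mem_nhdsLT hr0)).exists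
  refine ⟨z, hz0, hfz, ?_⟩
  have hgz : g z < g r := by
    simp only [hg]
    gcongr
  exact hgz.trans_eq hgr
end

section
/- Suppose α_i, δ_i, γ_i > 0 and β_i ≥ m(δ_i + γ_i) for i = 1,2 with m ≥ 2, and θ_1, θ_2 ∈ (0,1) with θ_1 + θ_2 = 1. Then for i = 1,2 one has 2β_i − θ_i γ_i > θ_{−i} γ_i + δ_i > 0; consequently the denominator D := (2β_1 − θ_1γ_1)(2β_2 − θ_2γ_2) − (θ_2γ_1 + δ_1)(θ_1γ_2 + δ_2) is strictly positive, and the closed-form quantities p_i* = (2α_i β_{−i} − α_i θ_{−i} γ_{−i} + α_{−i}(δ_i + θ_{−i} γ_i))/D for i = 1,2 and r* = (θ_1(2α_1β_2 + α_2δ_1) + θ_2(2α_2β_1 + α_1δ_2))/D are strictly positive. -/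
/-!
Since `θ₁ + θ₂ = 1`, the gap `(2βᵢ − θᵢγᵢ) − (θ₋ᵢγᵢ + δᵢ)` equals `2βᵢ − γᵢ − δᵢ`, which is positive
because `βᵢ ≥ m(δᵢ + γᵢ) ≥ 2(δᵢ + γᵢ)`. Multiplying the two resulting inequalities between positive
numbers gives `D > 0`, and each numerator is a sum of positive terms once `αᵢ` is factored out.
-/

/-- Under the model assumptions, `2βᵢ − θᵢγᵢ > θ₋ᵢγᵢ + δᵢ > 0`
for `i = 1, 2`; hence the denominator `D` of the closed-form SNE is strictly
positive, and so are the closed-form quantities `p₁*, p₂*, r*`. -/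
theorem stmt_19
    (α₁ α₂ β₁ β₂ δ₁ δ₂ γ₁ γ₂ m θ₁ θ₂ : ℝ)
    (hα₁ : 0 < α₁) (hα₂ : 0 < α₂) (hδ₁ : 0 < δ₁) (hδ₂ : 0 < δ₂)
    (hγ₁ : 0 < γ₁) (hγ₂ : 0 < γ₂) (hm : 2 ≤ m)
    (hβ₁ : m * (δ₁ + γ₁) ≤ β₁) (hβ₂ : m * (δ₂ + γ₂) ≤ β₂)
    (hθ₁ : θ₁ ∈ Set.Ioo (0 : ℝ) 1) (hθ₂ : θ₂ ∈ Set.Ioo (0 : ℝ) 1) (hθ : θ₁ + θ₂ = 1)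
    (D : ℝ)
    (hD : D = (2 * β₁ - θ₁ * γ₁) * (2 * β₂ - θ₂ * γ₂) -
      (θ₂ * γ₁ + δ₁) * (θ₁ * γ₂ + δ₂)) :
    (0 < θ₂ * γ₁ + δ₁ ∧ θ₂ * γ₁ + δ₁ < 2 * β₁ - θ₁ * γ₁) ∧
    (0 < θ₁ * γ₂ + δ₂ ∧ θ₁ * γ₂ + δ₂ < 2 * β₂ - θ₂ * γ₂) ∧
    0 < D ∧
    0 < (2 * α₁ * β₂ - α₁ * θ₂ * γ₂ + α₂ * (δ₁ + θ₂ * γ₁)) / D ∧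
    0 < (2 * α₂ * β₁ - α₂ * θ₁ * γ₁ + α₁ * (δ₂ + θ₁ * γ₂)) / D ∧
    0 < (θ₁ * (2 * α₁ * β₂ + α₂ * δ₁) + θ₂ * (2 * α₂ * β₁ + α₁ * δ₂)) / D := by
  obtain ⟨hθ₁, -⟩ := hθ₁
  obtain ⟨hθ₂, -⟩ := hθ₂
  have hb₁ : 2 * (δ₁ + γ₁) ≤ β₁ :=
    (mul_le_mul_of_nonneg_right hm (by positivity)).trans hβ₁
  have hb₂ : 2 * (δ₂ + γ₂) ≤ β₂ :=
    (mul_le_mul_of_nonneg_right hm (by positivity)).trans hβ₂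
  have hβ₁pos : 0 < β₁ := by linarith
  have hβ₂pos : 0 < β₂ := by linarith
  have e₁ : θ₁ * γ₁ + θ₂ * γ₁ = γ₁ := by rw [← add_mul, hθ, one_mul]
  have e₂ : θ₁ * γ₂ + θ₂ * γ₂ = γ₂ := by rw [← add_mul, hθ, one_mul]
  have p₁ : 0 < θ₂ * γ₁ + δ₁ := by positivity
  have p₂ : 0 < θ₁ * γ₂ + δ₂ := by positivity
  have q₁ : θ₂ * γ₁ + δ₁ < 2 * β₁ - θ₁ * γ₁ := by linarith
  have q₂ : θ₁ * γ₂ + δ₂ < 2 * β₂ - θ₂ * γ₂ := by linarith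
  have hDpos : 0 < D := by
    rw [hD, sub_pos]
    exact mul_lt_mul'' q₁ q₂ p₁.le p₂.le
  refine ⟨⟨p₁, q₁⟩, ⟨p₂, q₂⟩, hDpos, div_pos ?_ hDpos, div_pos ?_ hDpos, by positivity⟩
  · have h₁ := mul_pos hα₁ (p₂.trans q₂)
    have h₂ := mul_pos hα₂ p₁
    linarith
  · have h₁ := mul_pos hα₂ (p₁.trans q₁)
    have h₂ := mul_pos hα₁ p₂
    linarith
end
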